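/- arXiv:1110.2351 — 3 statements merged into one kernel-verified Lean document; each statement's English description precedes it below -/
import Mathlib

section
/- Let f : ℝ → ℝ be 2π-periodic and of bounded variation on [−π, π], and let x ∈ ℝ. Then the one-sided limits f(x⁺) and f(x⁻) exist, and the partial sums S_N(f)(x) = Σ_{|k| ≤ N} c_k e^{ikx} of the Fourier series of f converge, as N → ∞, to (f(x⁺) + f(x⁻))/2 (Jordan's test, extending Dirichlet's condition for the convergence of Fourier series to functions of bounded variation). -/
open Filter Topology

/-!
The `N`-th partial sum at `x` is `(1 / 2π) ∫_0^π (f (x + t) + f (x - t)) D_N t dt`, where the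
Dirichlet kernel `D_N` has integral `π` over `[0, π]`. These kernels are not bounded in `L¹`, but
the tail integrals `∫_s^π D_N` are bounded uniformly in `s` and `N`, and they tend to `0` for each
fixed `s > 0`. For monotone `p`, writing `p t = p 0⁺ + ∫_{(0, t]} dp` and applying Fubini gives
`∫_0^π p D_N = p 0⁺ * π + ∫_{(0, π]} (∫_s^π D_N) dp(s)`, and the last term tends to `0` by dominated
convergence with respect to the Stieltjes measure `dp`. A function of bounded variation is a
difference of two monotone functions.
-/

open MeasureTheory Set
open scoped Interval

section Periodic

variable {α E : Type*} [AddCommGroup α] [LinearOrder α] [IsOrderedAddMonoid α]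
  [PseudoEMetricSpace E] {f : α → E} {c : α}

theorem eVariationOn_Icc_add_of_periodic (hf : Function.Periodic f c) (a b : α) :
    eVariationOn f (Icc (a + c) (b + c)) = eVariationOn f (Icc a b) := by
  rw [← image_add_const_Icc, ← eVariationOn.comp_eq_of_monotoneOn f (· + c)
    (fun _ _ _ _ h ↦ add_le_add_left h c)]
  exact congrArg (eVariationOn · _) (funext hf)

theorem eVariationOn_Icc_add_nsmul_of_periodic (hf : Function.Periodic f c) (hc : 0 ≤ c)
    (a : α) (n : ℕ) :
    eVariationOn f (Icc a (a + n • c)) = n * eVariationOn f (Icc a (a + c)) := by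
  induction n with
  | zero => simp [eVariationOn.subsingleton]
  | succ n ih =>
    have hsplit := eVariationOn.Icc_add_Icc f (le_add_of_nonneg_right (nsmul_nonneg hc n))
      (le_add_of_nonneg_right hc) (mem_univ (a + n • c))
    have hlast : eVariationOn f (Icc (a + n • c) (a + n • c + c)) =
        eVariationOn f (Icc a (a + c)) := by
      rw [add_right_comm, eVariationOn_Icc_add_of_periodic (hf.nsmul n)]
    simp only [univ_inter] at hsplit
    rw [succ_nsmul, ← add_assoc, ← hsplit, hlast, ih, Nat.cast_succ, add_one_mul]

theorem locallyBoundedVariationOn_univ_of_periodic [Archimedean α] (hf : Function.Periodic f c)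
    (hc : 0 < c) {a : α} (hbv : BoundedVariationOn f (Icc a (a + c))) :
    LocallyBoundedVariationOn f univ := by
  intro u v _ _
  obtain ⟨m, hm⟩ := Archimedean.arch (a - u) hc
  obtain ⟨n, hn⟩ := Archimedean.arch (v + m • c - a) hc
  rw [univ_inter, BoundedVariationOn, ← eVariationOn_Icc_add_of_periodic (hf.nsmul m)]
  have hfin : BoundedVariationOn f (Icc a (a + n • c)) := by
    rw [BoundedVariationOn, eVariationOn_Icc_add_nsmul_of_periodic hf hc.le]
    exact ENNReal.mul_ne_top (ENNReal.natCast_ne_top n) hbv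
  exact hfin.mono (Icc_subset_Icc (sub_le_iff_le_add'.1 hm) (sub_le_iff_le_add'.1 hn))

end Periodic

theorem exists_tendsto_nhdsGT_of_locallyBoundedVariationOn {α E : Type*} [LinearOrder α]
    [TopologicalSpace α] [OrderTopology α] [NoMaxOrder α] [PseudoEMetricSpace E] [CompleteSpace E]
    {f : α → E} (hf : LocallyBoundedVariationOn f univ) (x : α) :
    ∃ l, Tendsto f (𝓝[>] x) (𝓝 l) := by
  obtain ⟨y, hxy⟩ := exists_gt x
  obtain ⟨l, hl⟩ := (hf x y trivial trivial).exists_tendsto_right x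
  refine ⟨l, hl.mono_left (nhdsWithin_le_iff.2 ?_)⟩
  filter_upwards [Ioc_mem_nhdsGT hxy] with t ht using ⟨⟨trivial, ht.1.le, ht.2⟩, ht.1⟩

theorem exists_tendsto_nhdsLT_of_locallyBoundedVariationOn {α E : Type*} [LinearOrder α]
    [TopologicalSpace α] [OrderTopology α] [NoMinOrder α] [PseudoEMetricSpace E] [CompleteSpace E]
    {f : α → E} (hf : LocallyBoundedVariationOn f univ) (x : α) :
    ∃ l, Tendsto f (𝓝[<] x) (𝓝 l) :=
  exists_tendsto_nhdsGT_of_locallyBoundedVariationOn hf.ofDual (OrderDual.toDual x)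

section Stieltjes

variable {E : Type*} [NormedAddCommGroup E] [NormedSpace ℝ E] {a b : ℝ} {g : ℝ → E}

theorem intervalIntegrable_smul_of_monotoneOn {p : ℝ → ℝ} (hab : a ≤ b)
    (hp : MonotoneOn p (Icc a b)) (hg : IntervalIntegrable g volume a b) :
    IntervalIntegrable (fun t ↦ p t • g t) volume a b := by
  rw [intervalIntegrable_iff_integrableOn_Icc_of_le hab] at hg ⊢
  refine hg.bdd_smul (max |p a| |p b|)
    (aemeasurable_restrict_of_monotoneOn measurableSet_Icc hp).aestronglyMeasurable ?_
  filter_upwards [ae_restrict_mem measurableSet_Icc] with t ht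
  exact abs_le_max_abs_abs (hp (left_mem_Icc.2 hab) ht ht.1) (hp ht (right_mem_Icc.2 hab) ht.2)

variable [CompleteSpace E]

theorem integral_stieltjesFunction_smul (F : StieltjesFunction ℝ) (hab : a ≤ b)
    (hg : IntervalIntegrable g volume a b) :
    ∫ t in a..b, F t • g t =
      F a • (∫ t in a..b, g t) + ∫ s in Ioc a b, (∫ t in s..b, g t) ∂F.measure := by
  have : IsFiniteMeasure (F.measure.restrict (Ioc a b)) :=
    isFiniteMeasure_restrict.2 (by simp [F.measure_Ioc])
  have hgi : Integrable g (volume.restrict (Ioc a b)) :=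
    (intervalIntegrable_iff_integrableOn_Ioc_of_le hab).1 hg
  let T : Set (ℝ × ℝ) := {z | z.2 ≤ z.1}
  have hT : MeasurableSet T := measurableSet_le measurable_snd measurable_fst
  have hinc : ∫ t in Ioc a b, (F t - F a) • g t =
      ∫ t in Ioc a b, ∫ s in Ioc a b, T.indicator (fun z ↦ g z.1) (t, s) ∂F.measure := by
    refine setIntegral_congr_fun measurableSet_Ioc fun t ht ↦ ?_
    have hset : Iic t ∩ Ioc a b = Ioc a t := by grind
    have hind : (fun s ↦ T.indicator (fun z ↦ g z.1) (t, s)) = (Iic t).indicator fun _ ↦ g t := rfl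
    rw [hind, integral_indicator measurableSet_Iic, Measure.restrict_restrict measurableSet_Iic,
      hset, setIntegral_const, measureReal_def, F.measure_Ioc,
      ENNReal.toReal_ofReal (sub_nonneg.2 (F.mono ht.1.le))]
  have htail : ∫ s in Ioc a b, (∫ t in s..b, g t) ∂F.measure =
      ∫ s in Ioc a b, (∫ t in Ioc a b, T.indicator (fun z ↦ g z.1) (t, s)) ∂F.measure := by
    refine setIntegral_congr_fun measurableSet_Ioc fun s hs ↦ ?_
    have hset : Ici s ∩ Ioc a b = Icc s b := by grind
    have hind : (fun t ↦ T.indicator (fun z ↦ g z.1) (t, s)) = (Ici s).indicator g := rfl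
    rw [hind, integral_indicator measurableSet_Ici, Measure.restrict_restrict measurableSet_Ici,
      hset, integral_Icc_eq_integral_Ioc, intervalIntegral.integral_of_le hs.2]
  have hswap := integral_integral_swap (f := fun t s ↦ T.indicator (fun z ↦ g z.1) (t, s))
    ((hgi.comp_fst (F.measure.restrict (Ioc a b))).indicator hT)
  rw [htail, ← hswap, ← hinc, ← intervalIntegral.integral_of_le hab]
  simp only [sub_smul]
  have hconst : IntervalIntegrable (fun t ↦ F a • g t) volume a b := hg.smul (F a)
  rw [intervalIntegral.integral_sub
    (intervalIntegrable_smul_of_monotoneOn hab (F.mono.monotoneOn _) hg) hconst,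
    intervalIntegral.integral_smul, add_sub_cancel]

theorem exists_stieltjesFunction_of_monotoneOn {p : ℝ → ℝ} (hab : a < b)
    (hp : MonotoneOn p (Icc a b)) :
    ∃ F : StieltjesFunction ℝ, Tendsto p (𝓝[>] a) (𝓝 (F a)) ∧ F b = p b ∧
      ∀ᵐ t, t ∈ Ι a b → p t = F t := by
  have hq : Monotone (IccExtend hab.le ((Icc a b).domRestrict p)) :=
    Monotone.IccExtend hab.le (monotoneOn_iff_monotone.1 hp)
  set q := IccExtend hab.le ((Icc a b).domRestrict p) with hqdef
  have hpq : ∀ t ∈ Icc a b, q t = p t := fun t ht ↦ IccExtend_of_mem _ _ ht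
  refine ⟨hq.stieltjesFunction, ?_, ?_, ?_⟩
  · rw [hq.stieltjesFunction_eq]
    refine (hq.tendsto_rightLim a).congr' ?_
    filter_upwards [Ioc_mem_nhdsGT hab] with t ht using hpq t (Ioc_subset_Icc_self ht)
  · have hconst : ContinuousWithinAt q (Ici b) b :=
      (continuousWithinAt_const (b := p b)).congr_of_mem
        (fun t ht ↦ by rw [hqdef, IccExtend_of_right_le _ _ ht]; rfl) self_mem_Ici
    rw [hq.stieltjesFunction_eq, hconst.rightLim_eq, hpq b (right_mem_Icc.2 hab.le)]
  · filter_upwards [hq.countable_not_continuousAt.ae_notMem volume] with t ht htab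
    rw [uIoc_of_le hab.le] at htab
    rw [hq.stieltjesFunction_eq, (not_not.1 ht).continuousWithinAt.rightLim_eq,
      hpq t (Ioc_subset_Icc_self htab)]

theorem norm_integral_smul_le_of_antitoneOn {u : ℝ → ℝ} {C : ℝ} (hab : a ≤ b)
    (hu : AntitoneOn u (Icc a b)) (hub : 0 ≤ u b) (hg : IntervalIntegrable g volume a b)
    (hC : ∀ s ∈ Icc a b, ‖∫ t in s..b, g t‖ ≤ C) :
    ‖∫ t in a..b, u t • g t‖ ≤ 2 * C * u a := by
  have hC0 : 0 ≤ C := (norm_nonneg _).trans (hC a (left_mem_Icc.2 hab))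
  obtain rfl | hab := hab.eq_or_lt
  · rw [intervalIntegral.integral_same, norm_zero]
    positivity
  obtain ⟨F, hFa, hFb, hF⟩ := exists_stieltjesFunction_of_monotoneOn hab hu.neg
  have hFa_ge : -u a ≤ F a := by
    refine ge_of_tendsto hFa ?_
    filter_upwards [Ioc_mem_nhdsGT hab] with t ht
    exact neg_le_neg (hu (left_mem_Icc.2 hab.le) (Ioc_subset_Icc_self ht) ht.1.le)
  have hFab : F a ≤ F b := F.mono hab.le
  have hstieltjes : ‖∫ s in Ioc a b, (∫ t in s..b, g t) ∂F.measure‖ ≤ C * (F b - F a) := by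
    have := norm_setIntegral_le_of_norm_le_const (μ := F.measure) (s := Ioc a b)
      (by simp [F.measure_Ioc]) fun s hs ↦ hC s (Ioc_subset_Icc_self hs)
    rwa [measureReal_def, F.measure_Ioc, ENNReal.toReal_ofReal (sub_nonneg.2 hFab)] at this
  have hparts : ∫ t in a..b, u t • g t =
      -(F a • (∫ t in a..b, g t) + ∫ s in Ioc a b, (∫ t in s..b, g t) ∂F.measure) := by
    rw [← integral_stieltjesFunction_smul F hab.le hg, ← intervalIntegral.integral_neg]
    refine intervalIntegral.integral_congr_ae ?_
    filter_upwards [hF] with t ht htab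
    rw [← ht htab, neg_smul, neg_neg]
  calc ‖∫ t in a..b, u t • g t‖
      ≤ |F a| * C + C * (F b - F a) := by
        rw [hparts, norm_neg]
        refine norm_add_le_of_le ?_ hstieltjes
        rw [norm_smul, Real.norm_eq_abs]
        gcongr
        exact hC a (left_mem_Icc.2 hab.le)
    _ = C * (2 * -F a - u b) := by
        rw [abs_of_nonpos (by linarith), hFb]
        ring
    _ ≤ C * (2 * u a) := by
        gcongr
        linarith
    _ = 2 * C * u a := by ring

end Stieltjes

/-- A one-sided approximate identity: the kernels `K i` on `[a, b]` have total integral tending to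
`m`, and this mass accumulates at `a⁺`. Neither positivity nor a uniform `L¹` bound is assumed, so
that oscillating kernels qualify; only the tail integrals over `[s, b]` are controlled. -/
structure ConcentratesAtLeft {ι E : Type*} [NormedAddCommGroup E] [NormedSpace ℝ E]
    (K : ι → ℝ → E) (l : Filter ι) (a b : ℝ) (m : E) : Prop where
  intervalIntegrable : ∀ i, IntervalIntegrable (K i) volume a b
  exists_norm_integral_le : ∃ C, ∀ i, ∀ s ∈ Ioc a b, ‖∫ t in s..b, K i t‖ ≤ C
  tendsto_integral_zero : ∀ s ∈ Ioc a b, Tendsto (fun i ↦ ∫ t in s..b, K i t) l (𝓝 0)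
  tendsto_integral : Tendsto (fun i ↦ ∫ t in a..b, K i t) l (𝓝 m)

namespace ConcentratesAtLeft

variable {ι E : Type*} [NormedAddCommGroup E] [NormedSpace ℝ E] {K : ι → ℝ → E} {l : Filter ι}
  [l.IsCountablyGenerated] [CompleteSpace E] {a b L : ℝ} {m : E}

theorem tendsto_integral_stieltjesFunction_smul (hK : ConcentratesAtLeft K l a b m)
    (hab : a ≤ b) (F : StieltjesFunction ℝ) :
    Tendsto (fun i ↦ ∫ t in a..b, F t • K i t) l (𝓝 (F a • m)) := by
  obtain ⟨C, hC⟩ := hK.exists_norm_integral_le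
  have hlim : Tendsto (fun i ↦ ∫ s in Ioc a b, (∫ t in s..b, K i t) ∂F.measure) l (𝓝 0) := by
    have hfin : IsFiniteMeasure (F.measure.restrict (Ioc a b)) :=
      isFiniteMeasure_restrict.2 (by simp [F.measure_Ioc])
    have hmeas (i : ι) : AEStronglyMeasurable (fun s ↦ ∫ t in s..b, K i t)
        (F.measure.restrict (Ioc a b)) := by
      have hcont := intervalIntegral.continuousOn_primitive_interval_left
        ((intervalIntegrable_iff' (by simp)).1 (hK.intervalIntegrable i))
      rw [uIcc_of_le hab] at hcont
      exact (hcont.mono Ioc_subset_Icc_self).aestronglyMeasurable measurableSet_Ioc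
    have hdom := tendsto_integral_filter_of_dominated_convergence
      (μ := F.measure.restrict (Ioc a b)) (F := fun i s ↦ ∫ t in s..b, K i t) (f := fun _ ↦ 0)
      (fun _ ↦ C) (.of_forall hmeas)
      (.of_forall fun i ↦ (ae_restrict_mem measurableSet_Ioc).mono (hC i))
      (integrable_const C)
      ((ae_restrict_mem measurableSet_Ioc).mono hK.tendsto_integral_zero)
    rwa [integral_zero] at hdom
  simpa only [integral_stieltjesFunction_smul F hab (hK.intervalIntegrable _), add_zero]
    using (hK.tendsto_integral.const_smul (F a)).add hlim

theorem tendsto_integral_smul_of_monotoneOn (hK : ConcentratesAtLeft K l a b m) (hab : a < b)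
    {p : ℝ → ℝ} (hp : MonotoneOn p (Icc a b)) :
    ∃ L, Tendsto p (𝓝[>] a) (𝓝 L) ∧
      Tendsto (fun i ↦ ∫ t in a..b, p t • K i t) l (𝓝 (L • m)) := by
  obtain ⟨F, hFa, -, hpF⟩ := exists_stieltjesFunction_of_monotoneOn hab hp
  refine ⟨F a, hFa, (hK.tendsto_integral_stieltjesFunction_smul hab.le F).congr fun i ↦ ?_⟩
  refine intervalIntegral.integral_congr_ae ?_
  filter_upwards [hpF] with t ht htab
  rw [ht htab]

theorem tendsto_integral_smul (hK : ConcentratesAtLeft K l a b m) (hab : a < b) {f : ℝ → ℝ}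
    (hf : BoundedVariationOn f (Icc a b)) (hL : Tendsto f (𝓝[>] a) (𝓝 L)) :
    Tendsto (fun i ↦ ∫ t in a..b, f t • K i t) l (𝓝 (L • m)) := by
  obtain ⟨p, q, hp, hq, rfl⟩ := hf.locallyBoundedVariationOn.exists_monotoneOn_sub_monotoneOn
  obtain ⟨P, hP, hPK⟩ := hK.tendsto_integral_smul_of_monotoneOn hab hp
  obtain ⟨Q, hQ, hQK⟩ := hK.tendsto_integral_smul_of_monotoneOn hab hq
  rw [tendsto_nhds_unique hL (hP.sub hQ), sub_smul]
  refine (hPK.sub hQK).congr fun i ↦ ?_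
  simp only [Pi.sub_apply, sub_smul]
  rw [intervalIntegral.integral_sub
    (intervalIntegrable_smul_of_monotoneOn hab.le hp (hK.intervalIntegrable i))
    (intervalIntegrable_smul_of_monotoneOn hab.le hq (hK.intervalIntegrable i))]

end ConcentratesAtLeft

theorem intervalIntegrable_of_boundedVariationOn {f : ℝ → ℝ} {a b : ℝ}
    (hf : BoundedVariationOn f [[a, b]]) : IntervalIntegrable f volume a b := by
  obtain ⟨p, q, hp, hq, rfl⟩ := hf.locallyBoundedVariationOn.exists_monotoneOn_sub_monotoneOn
  exact hp.intervalIntegrable.sub hq.intervalIntegrable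

theorem abs_integral_sin_mul_le {n : ℝ} (hn : 0 < n) (a b : ℝ) :
    |∫ t in a..b, Real.sin (n * t)| ≤ 2 / n := by
  rw [intervalIntegral.integral_comp_mul_left _ hn.ne', integral_sin, smul_eq_mul, abs_mul,
    abs_of_pos (inv_pos.2 hn), inv_mul_eq_div]
  gcongr
  calc |Real.cos (n * a) - Real.cos (n * b)|
      ≤ |Real.cos (n * a)| + |Real.cos (n * b)| := abs_sub _ _
    _ ≤ 2 := by linarith [Real.abs_cos_le_one (n * a), Real.abs_cos_le_one (n * b)]

/-- The Dirichlet kernel `∑_{|k| ≤ N} e^{ikt}`, in real form. With this normalization its integral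
over `[0, π]` is `π`. -/
noncomputable def dirichletKernel (N : ℕ) (t : ℝ) : ℝ :=
  1 + 2 * ∑ k ∈ Finset.range N, Real.cos ((k + 1) * t)

theorem dirichletKernel_zero (t : ℝ) : dirichletKernel 0 t = 1 := by
  simp [dirichletKernel]

theorem dirichletKernel_succ (N : ℕ) (t : ℝ) :
    dirichletKernel (N + 1) t = dirichletKernel N t + 2 * Real.cos ((N + 1) * t) := by
  rw [dirichletKernel, dirichletKernel, Finset.sum_range_succ, mul_add, add_assoc]

theorem continuous_dirichletKernel (N : ℕ) : Continuous (dirichletKernel N) := by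
  unfold dirichletKernel
  fun_prop

theorem even_dirichletKernel (N : ℕ) : (dirichletKernel N).Even := fun t ↦ by
  simp only [dirichletKernel, mul_neg, Real.cos_neg]

theorem periodic_dirichletKernel (N : ℕ) :
    Function.Periodic (dirichletKernel N) (2 * Real.pi) := fun t ↦ by
  have hcos (k : ℕ) : Real.cos ((k + 1) * (t + 2 * Real.pi)) = Real.cos ((k + 1) * t) := by
    rw [mul_add]
    exact_mod_cast Real.cos_add_nat_mul_two_pi ((k + 1) * t) (k + 1)
  simp only [dirichletKernel, hcos]

theorem abs_dirichletKernel_le (N : ℕ) (t : ℝ) : |dirichletKernel N t| ≤ 2 * N + 1 := by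
  induction N with
  | zero => simp [dirichletKernel_zero]
  | succ N ih =>
    calc |dirichletKernel (N + 1) t|
        ≤ |dirichletKernel N t| + |2 * Real.cos ((N + 1) * t)| := by
          rw [dirichletKernel_succ]
          exact abs_add_le _ _
      _ ≤ (2 * N + 1) + 2 := by
          gcongr
          rw [abs_mul, abs_two]
          exact mul_le_of_le_one_right zero_le_two (Real.abs_cos_le_one _)
      _ = 2 * ↑(N + 1) + 1 := by push_cast; ring

theorem integral_dirichletKernel (N : ℕ) : ∫ t in 0..Real.pi, dirichletKernel N t = Real.pi := by
  induction N with
  | zero => simp [dirichletKernel_zero]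
  | succ N ih =>
    have hcos : ∫ t in 0..Real.pi, Real.cos ((N + 1) * t) = 0 := by
      have hsin : Real.sin ((N + 1) * Real.pi) = 0 := by exact_mod_cast Real.sin_nat_mul_pi (N + 1)
      rw [intervalIntegral.integral_comp_mul_left _ (Nat.cast_add_one_ne_zero N), integral_cos,
        hsin, mul_zero, Real.sin_zero, sub_zero, smul_zero]
    simp only [dirichletKernel_succ]
    rw [intervalIntegral.integral_add ((continuous_dirichletKernel N).intervalIntegrable _ _)
      (Continuous.intervalIntegrable (by fun_prop) _ _), intervalIntegral.integral_const_mul, ih,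
      hcos, mul_zero, add_zero]

theorem dirichletKernel_mul_sin_half (N : ℕ) (t : ℝ) :
    dirichletKernel N t * Real.sin (t / 2) = Real.sin ((N + 1 / 2) * t) := by
  induction N with
  | zero =>
    rw [dirichletKernel_zero]
    push_cast
    ring_nf
  | succ N ih =>
    have hlow : (N + 1 / 2) * t = (N + 1) * t - t / 2 := by ring
    have hhigh : (↑(N + 1) + 1 / 2) * t = (N + 1) * t + t / 2 := by push_cast; ring
    rw [dirichletKernel_succ, add_mul, ih, hlow, hhigh, Real.sin_sub, Real.sin_add]
    ring

theorem abs_integral_dirichletKernel_le_div {c : ℝ} (hc : c ∈ Ioc 0 Real.pi) (N : ℕ) :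
    |∫ t in c..Real.pi, dirichletKernel N t| ≤ 4 / ((N + 1 / 2) * Real.sin (c / 2)) := by
  have hn : (0 : ℝ) < N + 1 / 2 := by positivity
  have hsin : ∀ t ∈ Icc c Real.pi, 0 < Real.sin (t / 2) := fun t ht ↦
    Real.sin_pos_of_pos_of_lt_pi (by linarith [hc.1, ht.1]) (by linarith [ht.2, Real.pi_pos])
  have hanti : AntitoneOn (fun t ↦ 1 / Real.sin (t / 2)) (Icc c Real.pi) := fun s hs t ht hst ↦
    one_div_le_one_div_of_le (hsin s hs) <| Real.sin_le_sin_of_le_of_le_pi_div_two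
      (by linarith [hc.1, hs.1, Real.pi_pos]) (by linarith [ht.2]) (by linarith)
  have hker : ∫ t in c..Real.pi, dirichletKernel N t =
      ∫ t in c..Real.pi, (1 / Real.sin (t / 2)) • Real.sin ((N + 1 / 2) * t) := by
    refine intervalIntegral.integral_congr fun t ht ↦ ?_
    rw [uIcc_of_le hc.2] at ht
    have hne := (hsin t ht).ne'
    simp only [← dirichletKernel_mul_sin_half, smul_eq_mul]
    field_simp
  rw [hker]
  calc |∫ t in c..Real.pi, (1 / Real.sin (t / 2)) • Real.sin ((N + 1 / 2) * t)|
      ≤ 2 * (2 / (N + 1 / 2)) * (1 / Real.sin (c / 2)) :=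
        norm_integral_smul_le_of_antitoneOn hc.2 hanti
          (one_div_nonneg.2 (hsin _ (right_mem_Icc.2 hc.2)).le)
          (g := fun t ↦ Real.sin ((N + 1 / 2) * t))
          (Continuous.intervalIntegrable (by fun_prop) _ _)
          fun s _ ↦ abs_integral_sin_mul_le hn s Real.pi
    _ = 4 / ((N + 1 / 2) * Real.sin (c / 2)) := by
        have hne := (hsin c (left_mem_Icc.2 hc.2)).ne'
        field_simp
        norm_num

theorem abs_integral_dirichletKernel_le {c : ℝ} (hc : c ∈ Ioc 0 Real.pi) (N : ℕ) :
    |∫ t in c..Real.pi, dirichletKernel N t| ≤ 4 * Real.pi := by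
  obtain hnc | hnc := le_total ((N + 1 / 2) * c) 1
  · have hhead : |∫ t in 0..c, dirichletKernel N t| ≤ (2 * N + 1) * |c - 0| :=
      intervalIntegral.norm_integral_le_of_norm_le_const (f := dirichletKernel N)
        fun t _ ↦ abs_dirichletKernel_le N t
    rw [sub_zero, abs_of_pos hc.1] at hhead
    have hsplit : ∫ t in c..Real.pi, dirichletKernel N t =
        Real.pi - ∫ t in 0..c, dirichletKernel N t := by
      have hint (u v : ℝ) : IntervalIntegrable (dirichletKernel N) volume u v :=
        (continuous_dirichletKernel N).intervalIntegrable u v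
      rw [eq_sub_iff_add_eq', intervalIntegral.integral_add_adjacent_intervals (hint _ _)
        (hint _ _), integral_dirichletKernel]
    calc |∫ t in c..Real.pi, dirichletKernel N t|
        ≤ |Real.pi| + |∫ t in 0..c, dirichletKernel N t| := hsplit ▸ abs_sub _ _
      _ ≤ Real.pi + 2 := by rw [abs_of_pos Real.pi_pos]; linarith
      _ ≤ 4 * Real.pi := by linarith [Real.two_le_pi]
  · have hsin : c / Real.pi ≤ Real.sin (c / 2) := by
      have hjordan := Real.mul_le_sin (x := c / 2) (by linarith [hc.1]) (by linarith [hc.2])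
      rwa [div_mul_div_comm, mul_comm 2 c, mul_div_mul_right _ _ two_ne_zero] at hjordan
    have hcpi : 0 < c / Real.pi := div_pos hc.1 Real.pi_pos
    calc |∫ t in c..Real.pi, dirichletKernel N t|
        ≤ 4 / ((N + 1 / 2) * Real.sin (c / 2)) := abs_integral_dirichletKernel_le_div hc N
      _ ≤ 4 / ((N + 1 / 2) * (c / Real.pi)) := by gcongr
      _ = 4 * Real.pi / ((N + 1 / 2) * c) := by field_simp
      _ ≤ 4 * Real.pi := div_le_self (by positivity) hnc

theorem tendsto_integral_dirichletKernel_zero {c : ℝ} (hc : c ∈ Ioc 0 Real.pi) :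
    Tendsto (fun N ↦ ∫ t in c..Real.pi, dirichletKernel N t) atTop (𝓝 0) := by
  have hsin : 0 < Real.sin (c / 2) :=
    Real.sin_pos_of_pos_of_lt_pi (by linarith [hc.1]) (by linarith [hc.2, Real.pi_pos])
  refine squeeze_zero_norm (abs_integral_dirichletKernel_le_div hc) (.const_div_atTop ?_ 4)
  exact (tendsto_atTop_add_const_right _ _ tendsto_natCast_atTop_atTop).atTop_mul_const hsin

theorem concentratesAtLeft_dirichletKernel :
    ConcentratesAtLeft dirichletKernel atTop 0 Real.pi Real.pi where
  intervalIntegrable N := (continuous_dirichletKernel N).intervalIntegrable 0 Real.pi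
  exists_norm_integral_le := ⟨4 * Real.pi, fun N _ hs ↦ abs_integral_dirichletKernel_le hs N⟩
  tendsto_integral_zero _ hs := tendsto_integral_dirichletKernel_zero hs
  tendsto_integral := by simp only [integral_dirichletKernel, tendsto_const_nhds]

theorem tendsto_integral_comp_add_mul_dirichletKernel {f : ℝ → ℝ} {x a : ℝ}
    (hf : BoundedVariationOn f (Icc x (x + Real.pi))) (ha : Tendsto f (𝓝[>] x) (𝓝 a)) :
    Tendsto (fun N ↦ ∫ t in 0..Real.pi, f (x + t) * dirichletKernel N t) atTop
      (𝓝 (a * Real.pi)) := by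
  have hbv : BoundedVariationOn (fun t ↦ f (x + t)) (Icc 0 Real.pi) :=
    ne_top_of_le_ne_top hf <| eVariationOn.comp_le_of_monotoneOn f (x + ·)
      (fun _ _ _ _ h ↦ by simpa using h) fun t ht ↦ ⟨by linarith [ht.1], by linarith [ht.2]⟩
  have hlim : Tendsto (x + ·) (𝓝[>] 0) (𝓝[>] x) := by
    exact map_add_left_nhdsGT.trans_le (by rw [add_zero])
  exact concentratesAtLeft_dirichletKernel.tendsto_integral_smul Real.pi_pos hbv (ha.comp hlim)

theorem tendsto_integral_comp_sub_mul_dirichletKernel {f : ℝ → ℝ} {x b : ℝ}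
    (hf : BoundedVariationOn f (Icc (x - Real.pi) x)) (hb : Tendsto f (𝓝[<] x) (𝓝 b)) :
    Tendsto (fun N ↦ ∫ t in 0..Real.pi, f (x - t) * dirichletKernel N t) atTop
      (𝓝 (b * Real.pi)) := by
  have hbv : BoundedVariationOn (fun t ↦ f (x - t)) (Icc 0 Real.pi) :=
    ne_top_of_le_ne_top hf <| eVariationOn.comp_le_of_antitoneOn f (x - ·)
      (fun _ _ _ _ h ↦ sub_le_sub_left h x) fun t ht ↦ ⟨by linarith [ht.2], by linarith [ht.1]⟩
  have hlim : Tendsto (x - ·) (𝓝[>] 0) (𝓝[<] x) := by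
    refine tendsto_nhdsWithin_iff.2 ⟨?_, ?_⟩
    · simpa using ((continuous_sub_left x).tendsto 0).mono_left nhdsWithin_le_nhds
    · filter_upwards [self_mem_nhdsWithin] with t ht using sub_lt_self x ht
  exact concentratesAtLeft_dirichletKernel.tendsto_integral_smul Real.pi_pos hbv (hb.comp hlim)

theorem sum_exp_I_mul_eq_dirichletKernel (N : ℕ) (t : ℝ) :
    ∑ k ∈ Finset.Icc (-(N : ℤ)) N, Complex.exp (Complex.I * k * t) = dirichletKernel N t := by
  induction N with
  | zero => simp [dirichletKernel_zero]
  | succ N ih =>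
    have hpair : Complex.exp (Complex.I * (N + 1) * t) + Complex.exp (Complex.I * -(N + 1) * t) =
        2 * Complex.cos ((N + 1) * t) := by
      rw [Complex.two_cos]
      ring_nf
    rw [Nat.cast_succ, Finset.sum_Icc_succ_eq_add_endpoints, ih, dirichletKernel_succ]
    push_cast
    rw [hpair, add_comm]

theorem integral_comp_add_left_of_periodic {E : Type*} [NormedAddCommGroup E] [NormedSpace ℝ E]
    {g : ℝ → E} {c : ℝ} (hg : Function.Periodic g (2 * c)) (x : ℝ) :
    ∫ t in -c..c, g (x + t) = ∫ t in -c..c, g t := by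
  rw [intervalIntegral.integral_comp_add_left]
  convert hg.intervalIntegral_add_eq (x + -c) (-c) using 2 <;> ring

theorem integral_neg_to_self_eq_add {E : Type*} [NormedAddCommGroup E] [NormedSpace ℝ E]
    {g : ℝ → E} {c : ℝ} (hg : IntervalIntegrable g volume (-c) c) :
    ∫ t in -c..c, g t = (∫ t in 0..c, g t) + ∫ t in 0..c, g (-t) := by
  have hmem : (0 : ℝ) ∈ [[-c, c]] := by
    rw [mem_uIcc]
    grind
  rw [intervalIntegral.integral_comp_neg, neg_zero, add_comm,
    intervalIntegral.integral_add_adjacent_intervals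
      (hg.mono_set (uIcc_subset_uIcc_left hmem)) (hg.mono_set (uIcc_subset_uIcc_right hmem))]

theorem integral_mul_comp_sub_eq_add {A : Type*} [NormedRing A] [NormedSpace ℝ A] {f D : ℝ → A}
    {c x : ℝ} (hf : Function.Periodic f (2 * c)) (hD : Function.Periodic D (2 * c))
    (hDeven : D.Even) (hfD : IntervalIntegrable (fun t ↦ f (x + t) * D t) volume (-c) c) :
    ∫ t in -c..c, f t * D (x - t) =
      (∫ t in 0..c, f (x + t) * D t) + ∫ t in 0..c, f (x - t) * D t := by
  have hper : Function.Periodic (fun t ↦ f t * D (x - t)) (2 * c) := fun t ↦ by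
    simp only [hf t, ← sub_sub, hD.sub_eq]
  have hshift (t : ℝ) : D (x - (x + t)) = D t := by rw [sub_add_cancel_left, hDeven]
  rw [← integral_comp_add_left_of_periodic hper x]
  simp only [hshift, integral_neg_to_self_eq_add hfD, hDeven _, ← sub_eq_add_neg]

/-- The symmetric partial sum `∑_{|k| ≤ N} c_k e^{ikx}` of the Fourier series of a `2π`-periodic
function, whose coefficients `c_k` are computed over the period `[-π, π]`. -/
noncomputable def fourierPartialSum (f : ℝ → ℂ) (N : ℕ) (x : ℝ) : ℂ :=
  ∑ k ∈ Finset.Icc (-(N : ℤ)) N,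
    ((1 / (2 * Real.pi) : ℂ) *
      ∫ t in -Real.pi..Real.pi, f t * Complex.exp (-Complex.I * k * t)) *
        Complex.exp (Complex.I * k * x)

theorem fourierPartialSum_eq_integral_mul_dirichletKernel {f : ℝ → ℂ}
    (hf : IntervalIntegrable f volume (-Real.pi) Real.pi) (N : ℕ) (x : ℝ) :
    fourierPartialSum f N x =
      1 / (2 * Real.pi) * ∫ t in -Real.pi..Real.pi, f t * dirichletKernel N (x - t) := by
  have hexp (k : ℤ) (t : ℝ) :
      f t * Complex.exp (-Complex.I * k * t) * Complex.exp (Complex.I * k * x) =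
        f t * Complex.exp (Complex.I * k * ↑(x - t)) := by
    rw [mul_assoc, ← Complex.exp_add]
    congr 2
    push_cast
    ring
  simp only [fourierPartialSum, mul_assoc (1 / (2 * Real.pi) : ℂ),
    ← intervalIntegral.integral_mul_const, hexp]
  rw [← Finset.mul_sum, ← intervalIntegral.integral_finsetSum fun k _ ↦
    hf.mul_continuousOn (Continuous.continuousOn (by fun_prop))]
  simp only [← Finset.mul_sum, sum_exp_I_mul_eq_dirichletKernel]

theorem fourierPartialSum_ofReal_eq_integral_add {f : ℝ → ℝ}
    (hper : Function.Periodic f (2 * Real.pi))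
    (hf : IntervalIntegrable f volume (-Real.pi) Real.pi) (N : ℕ) (x : ℝ) :
    fourierPartialSum (fun t ↦ f t) N x =
      ((1 / (2 * Real.pi) * ((∫ t in 0..Real.pi, f (x + t) * dirichletKernel N t) +
        ∫ t in 0..Real.pi, f (x - t) * dirichletKernel N t) : ℝ) : ℂ) := by
  have hfC : IntervalIntegrable (fun t ↦ (f t : ℂ)) volume (-Real.pi) Real.pi :=
    ⟨hf.1.ofReal, hf.2.ofReal⟩
  have hshift : IntervalIntegrable (fun t ↦ f (x + t)) volume (-Real.pi) Real.pi := by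
    have hwindow := hper.intervalIntegrable (t := -Real.pi) Real.two_pi_pos.ne'
      (by rwa [two_mul, neg_add_cancel_left]) (x + -Real.pi) (x + Real.pi)
    simpa only [add_sub_cancel_left] using hwindow.comp_add_left x
  rw [← integral_mul_comp_sub_eq_add hper (periodic_dirichletKernel N) (even_dirichletKernel N)
      (hshift.mul_continuousOn (continuous_dirichletKernel N).continuousOn),
    fourierPartialSum_eq_integral_mul_dirichletKernel hfC]
  simp only [← Complex.ofReal_mul, intervalIntegral.integral_ofReal]
  push_cast
  rfl

/-- **Jordan's test for Fourier series.** If `f : ℝ → ℝ` is `2π`-periodic and of bounded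
variation on `[−π, π]`, then at every point `x` the one-sided limits `f(x⁺)` and `f(x⁻)`
exist and the symmetric partial sums `S_N(f)(x) = ∑_{|k| ≤ N} c_k e^{ikx}` of the Fourier
series of `f` converge to `(f(x⁺) + f(x⁻))/2` as `N → ∞`. -/
theorem jordan_test_fourier (f : ℝ → ℝ)
    (hper : Function.Periodic f (2 * Real.pi))
    (hbv : BoundedVariationOn f (Set.Icc (-Real.pi) Real.pi)) (x : ℝ) :
    ∃ a b : ℝ,
      Tendsto f (nhdsWithin x (Set.Ioi x)) (nhds a) ∧
      Tendsto f (nhdsWithin x (Set.Iio x)) (nhds b) ∧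
      Tendsto (fun N : ℕ =>
          ∑ k ∈ Finset.Icc (-(N : ℤ)) (N : ℤ),
            ((1 / (2 * Real.pi) : ℂ) *
                ∫ t in (-Real.pi)..Real.pi,
                  (f t : ℂ) * Complex.exp (-Complex.I * (k : ℂ) * (t : ℂ))) *
              Complex.exp (Complex.I * (k : ℂ) * (x : ℂ)))
        atTop (nhds (((a + b) / 2 : ℝ) : ℂ)) := by
  have hloc : LocallyBoundedVariationOn f univ :=
    locallyBoundedVariationOn_univ_of_periodic hper Real.two_pi_pos (a := -Real.pi)
      (by rwa [two_mul, neg_add_cancel_left])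
  have hIcc (u v : ℝ) : BoundedVariationOn f (Icc u v) := by
    simpa only [univ_inter] using hloc u v trivial trivial
  have hint : IntervalIntegrable f volume (-Real.pi) Real.pi :=
    intervalIntegrable_of_boundedVariationOn (hIcc _ _)
  obtain ⟨a, ha⟩ := exists_tendsto_nhdsGT_of_locallyBoundedVariationOn hloc x
  obtain ⟨b, hb⟩ := exists_tendsto_nhdsLT_of_locallyBoundedVariationOn hloc x
  refine ⟨a, b, ha, hb, ?_⟩
  change Tendsto (fun N ↦ fourierPartialSum (fun t ↦ f t) N x) atTop _
  simp only [fourierPartialSum_ofReal_eq_integral_add hper hint]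
  have hmean : (a + b) / 2 = 1 / (2 * Real.pi) * (a * Real.pi + b * Real.pi) := by
    field_simp
  rw [hmean]
  exact (Complex.continuous_ofReal.tendsto _).comp <|
    ((tendsto_integral_comp_add_mul_dirichletKernel (hIcc _ _) ha).add
      (tendsto_integral_comp_sub_mul_dirichletKernel (hIcc _ _) hb)).const_mul _
end

section
/- There exists an absolute constant A > 0 with the following property: for every n and every primitive subgroup G of the symmetric group S_n that does not contain the alternating group A_n, if c denotes the class of G (the smallest number c > 1 of points moved by some non-identity element of G), then n ≤ A · c² · log c. In particular, for each fixed c there are only finitely many degrees n admitting a primitive group of class c other than the symmetric and alternating groups (Jordan's finiteness theorem on the class of primitive groups). -/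
/-!
Say that `z` distinguishes `x` from `y` if `x` and `y` lie in different orbits of the stabilizer of
`z`, and let `D x y` be the set of such `z`. If `σ ∈ G` moves `p`, then `D p (σ p)` lies in the
support of `σ`, so it has at most `c = |supp σ|` elements. As `D` satisfies a triangle inequality
and `G` preserves distances in the (connected) orbital graph of `(p, σ p)`, one gets
`|D x y| ≤ c · dist x y`, and every vertex on a geodesic starting with an edge `x — v` lies in
`D x v`, so the diameter is at most `c`.

Call `(x, y)` dominant if the `x`-stabilizer has more than `2n/3` points in the orbit of `y`;
dominant pairs form at most one orbital, which is symmetric.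
* If there is no dominant pair, averaging gives `x, y` with `|D x y| ≥ n/3`, so `n ≤ 3c²`.
* If a dominant pair `(x, y)` has distance at least `3`, the orbit of `y` is covered by the sets
  `D x v` with `v` a neighbour of `x`, and there are at most `3c` such `v`.
* If dominant pairs have distance at most `2` but not all pairs are dominant, each point has
  `k < n/3` nondominant partners. By primitivity a dominant pair is joined by a path of two
  nondominant pairs, so `n ≤ 3k²/2`, and averaging shows that some dominant pair is
  distinguished by at least `k/2` points, so `k ≤ 4c`.
* If all pairs of distinct points are dominant, `G` is 2-transitive. When `n > c²`, some conjugate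
  of `σ` has support meeting that of `σ` in a single point; the commutator of the two is then a
  3-cycle, and a primitive group containing a 3-cycle contains the alternating group.
-/

namespace PrimitiveGroup

open MulAction Equiv.Perm
open scoped Pointwise commutatorElement

section Counting

variable {α β : Type*}

theorem ncard_mul_le_ncard_mul {s : Set α} {t : Set β} (hs : s.Finite) (ht : t.Finite)
    (r : α → β → Prop) {m n : ℕ} (hm : ∀ a ∈ s, m ≤ {b ∈ t | r a b}.ncard)
    (hn : ∀ b ∈ t, {a ∈ s | r a b}.ncard ≤ n) : s.ncard * m ≤ t.ncard * n := by
  classical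
  lift s to Finset α using hs
  lift t to Finset β using ht
  simp only [Set.ncard_coe_finset]
  refine Finset.card_mul_le_card_mul r (fun a ha => ?_) (fun b hb => ?_)
  · simpa [Finset.bipartiteAbove, ← Set.ncard_coe_finset] using hm a ha
  · simpa [Finset.bipartiteBelow, ← Set.ncard_coe_finset] using hn b hb

theorem ncard_biUnion_le_ncard_mul {s : Set α} (hs : s.Finite) (f : α → Set β) {m : ℕ}
    (hm : ∀ a ∈ s, (f a).ncard ≤ m) : (⋃ a ∈ s, f a).ncard ≤ s.ncard * m := by
  lift s to Finset α using hs
  rw [Set.ncard_coe_finset]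
  exact (s.set_ncard_biUnion_le f).trans (Finset.sum_le_card_nsmul _ _ _ hm)

end Counting

section GraphDistance

variable {V W : Type*} {Γ : SimpleGraph V} {Δ : SimpleGraph W}

theorem dist_map_le (f : Γ →g Δ) {u v : V} (h : Γ.Reachable u v) :
    Δ.dist (f u) (f v) ≤ Γ.dist u v := by
  obtain ⟨w, hw⟩ := h.exists_walk_length_eq_dist
  rw [← hw, ← SimpleGraph.Walk.length_map f w]
  exact SimpleGraph.dist_le _

theorem dist_map_iso (f : Γ ≃g Δ) (u v : V) : Δ.dist (f u) (f v) = Γ.dist u v := by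
  by_cases h : Γ.Reachable u v
  · refine le_antisymm (dist_map_le f.toHom h) ?_
    simpa using dist_map_le f.symm.toHom (h.map f.toHom)
  · rw [SimpleGraph.dist_eq_zero_of_not_reachable h,
      SimpleGraph.dist_eq_zero_of_not_reachable (by rwa [SimpleGraph.Iso.reachable_iff])]

theorem exists_dist_eq_and_add_dist_eq (hΓ : Γ.Connected) {u v : V} {k : ℕ}
    (hk : k ≤ Γ.dist u v) : ∃ w, Γ.dist u w = k ∧ k + Γ.dist w v = Γ.dist u v := by
  obtain ⟨p, hp⟩ := hΓ.exists_walk_length_eq_dist u v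
  refine ⟨p.getVert k, ?_⟩
  have htake := SimpleGraph.length_eq_dist_of_subwalk hp (p.isSubwalk_take k)
  have hdrop := SimpleGraph.length_eq_dist_of_subwalk hp (p.isSubwalk_drop k)
  rw [SimpleGraph.Walk.take_length] at htake
  rw [SimpleGraph.Walk.drop_length] at hdrop
  omega

theorem exists_adj_and_dist_eq_add_one (hΓ : Γ.Connected) {u v : V} (huv : u ≠ v) :
    ∃ w, Γ.Adj u w ∧ Γ.dist u v = Γ.dist w v + 1 := by
  obtain ⟨w, huw, hwv⟩ := exists_dist_eq_and_add_dist_eq hΓ (hΓ.pos_dist_of_ne huv)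
  exact ⟨w, SimpleGraph.dist_eq_one_iff_adj.mp huw, by omega⟩

end GraphDistance

section Action

variable {G α : Type*} [Group G] [MulAction G α]

theorem setoid_eq_top_of_isPreprimitive [IsPreprimitive G α] (s : Setoid α)
    (hs : ∀ (g : G) {a b : α}, s a b → s (g • a) (g • b)) {a b : α} (hab : a ≠ b) (h : s a b) :
    s = ⊤ := by
  have hblock : IsBlock G {x | s a x} := by
    rw [isBlock_iff_smul_eq_of_nonempty]
    rintro g ⟨_, ⟨v, hv, rfl⟩, hgv⟩
    have hga : s a (g • a) := s.trans hgv (s.symm (hs g hv))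
    ext y
    rw [Set.mem_smul_set_iff_inv_smul_mem]
    refine ⟨fun hy => ?_, fun hy => ?_⟩
    · simpa using s.trans hga (hs g hy)
    · simpa using hs g⁻¹ (s.trans (s.symm hga) hy)
  have huniv : {x | s a x} = Set.univ :=
    hblock.subsingleton_or_eq_univ.resolve_left fun hsub => hab (hsub (s.refl a) h)
  have ha (x : α) : s a x := huniv.ge (Set.mem_univ x)
  exact Setoid.eq_top_iff.mpr fun x y => s.trans (s.symm (ha x)) (ha y)

/-- P. M. Neumann's separation lemma. -/
theorem exists_forall_smul_notMem [IsPretransitive G α] (A B : Finset α)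
    (h : (A.card * B.card : ℕ) < ENat.card α) : ∃ g : G, ∀ x ∈ A, g • x ∉ B := by
  classical
  by_contra! hmeet
  choose t ht using exists_smul_eq G (α := α)
  have hcover : ⋃ i ∈ A ×ˢ B, t i.1 i.2 • (stabilizer G i.1 : Set G) = Set.univ := by
    refine Set.eq_univ_of_forall fun g => ?_
    obtain ⟨x, hx, hgx⟩ := hmeet g
    refine Set.mem_biUnion (Finset.mk_mem_product hx hgx) ?_
    rw [Set.mem_smul_set_iff_inv_smul_mem, SetLike.mem_coe, mem_stabilizer_iff, smul_eq_mul,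
      mul_smul, inv_smul_eq_iff, ht]
  obtain ⟨⟨x, y⟩, -, hfin, hle⟩ := Subgroup.exists_index_le_card_of_leftCoset_cover hcover
  have hindex := hfin.index_ne_zero
  rw [index_stabilizer_of_transitive] at hle hindex
  have : Finite α := (Nat.card_ne_zero.mp hindex).2
  rw [ENat.card_eq_coe_natCard, Nat.cast_lt, ← Finset.card_product] at h
  omega

theorem exists_smul_eq_self_and_forall_smul_notMem [IsMultiplyPretransitive G α 2] {a : α}
    {S : Finset α} (ha : a ∈ S) (h : (S.card ^ 2 : ℕ) < ENat.card α) :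
    ∃ g : G, g • a = a ∧ ∀ x ∈ S, x ≠ a → g • x ∉ S := by
  classical
  have : IsPretransitive G α := isPretransitive_of_is_two_pretransitive
  have : IsPretransitive (stabilizer G a) (SubMulAction.ofStabilizer G a) :=
    is_one_pretransitive_iff.mp (SubMulAction.ofStabilizer.isMultiplyPretransitive.mp ‹_›)
  set A : Finset (SubMulAction.ofStabilizer G a) := S.subtype (· ∈ SubMulAction.ofStabilizer G a)
  have hA : A.card + 1 ≤ S.card := by
    rw [Finset.card_subtype, ← Finset.card_erase_add_one ha]
    gcongr
    intro x hx
    rw [Finset.mem_filter, SubMulAction.mem_ofStabilizer_iff] at hx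
    exact Finset.mem_erase.mpr hx.symm
  have hlt : (A.card * A.card : ℕ) < ENat.card (SubMulAction.ofStabilizer G a) := by
    rw [← ENat.add_lt_add_iff_right ENat.one_ne_top, SubMulAction.ENat_card_ofStabilizer_add_one_eq]
    refine lt_of_le_of_lt ?_ h
    norm_cast
    nlinarith
  obtain ⟨⟨g, hg⟩, hgA⟩ := exists_forall_smul_notMem (G := stabilizer G a) A A hlt
  refine ⟨g, hg, fun x hx hxa hgx => ?_⟩
  exact hgA ⟨x, hxa⟩ (Finset.mem_subtype.mpr hx) (Finset.mem_subtype.mpr hgx)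

theorem mem_orbit_stabilizer {x y z : α} :
    y ∈ orbit (stabilizer G z) x ↔ ∃ g : G, g • z = z ∧ g • x = y := by
  simp [mem_orbit_iff, Subgroup.smul_def]

variable (G) in
theorem orbit_stabilizer_smul (g : G) (z x : α) :
    orbit (stabilizer G (g • z)) (g • x) = g • orbit (stabilizer G z) x := by
  ext y
  rw [Set.mem_smul_set_iff_inv_smul_mem, mem_orbit_stabilizer, mem_orbit_stabilizer]
  constructor
  · rintro ⟨h, hz, rfl⟩
    exact ⟨g⁻¹ * h * g, by simp [mul_smul, hz], by simp [mul_smul]⟩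
  · rintro ⟨h, hz, hx⟩
    exact ⟨g * h * g⁻¹, by simp [mul_smul, hz], by simp [mul_smul, hx]⟩

variable (G) in
theorem ncard_orbit_stabilizer_comm [Finite α] [IsPretransitive G α] (x y : α) :
    (orbit (stabilizer G x) y).ncard = (orbit (stabilizer G y) x).ncard := by
  have hmul (a b : α) : (orbit (stabilizer G a) b).ncard * Nat.card α =
      (stabilizer G b ⊓ stabilizer G a).index := by
    rw [← index_stabilizer_of_transitive G a, ← index_stabilizer, ← Subgroup.relIndex_mul_index
      inf_le_right, Subgroup.inf_relIndex_right]
    rfl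
  have : Nonempty α := ⟨x⟩
  refine Nat.eq_of_mul_eq_mul_right (Nat.card_pos (α := α)) ?_
  rw [hmul, hmul, inf_comm]

end Action

section Distinguishers

variable (G : Type*) {α : Type*} [Group G] [MulAction G α]

/-- The points `z` distinguishing `x` from `y`: those whose stabilizer does not carry `x` to `y`. -/
def distinguishers (x y : α) : Set α := {z | y ∉ orbit (stabilizer G z) x}

theorem distinguishers_self (x : α) : distinguishers G x x = ∅ :=
  Set.eq_empty_of_forall_notMem fun _ hz => hz (mem_orbit_self x)

theorem distinguishers_comm (x y : α) : distinguishers G x y = distinguishers G y x :=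
  Set.ext fun _ => not_congr mem_orbit_symm

theorem distinguishers_subset_union (x y w : α) :
    distinguishers G x w ⊆ distinguishers G x y ∪ distinguishers G y w := by
  intro z hz
  by_contra! h
  simp only [distinguishers, Set.mem_union, Set.mem_ofPred_eq, not_or, not_not] at h hz
  exact hz (orbit_eq_iff.mpr h.1 ▸ h.2)

variable {G}

theorem distinguishers_smul (g : G) (x y : α) :
    distinguishers G (g • x) (g • y) = g • distinguishers G x y := by
  ext z
  have h := Set.smul_mem_smul_set_iff (a := g) (x := y) (s := orbit (stabilizer G (g⁻¹ • z)) x)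
  rw [← orbit_stabilizer_smul, smul_inv_smul] at h
  rw [Set.mem_smul_set_iff_inv_smul_mem]
  exact not_congr h

theorem distinguishers_smul_right_subset (g : G) (x : α) :
    distinguishers G x (g • x) ⊆ (fixedBy α g)ᶜ :=
  fun _ hz hgz => hz (mem_orbit_stabilizer.mpr ⟨g, hgz, rfl⟩)

section InvariantGraph

variable {Γ : SimpleGraph α} {c : ℕ}

theorem mem_distinguishers_of_dist_ne (hinv : ∀ (g : G) a b, Γ.dist (g • a) (g • b) = Γ.dist a b)
    {x y z : α} (h : Γ.dist x z ≠ Γ.dist y z) : z ∈ distinguishers G x y := by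
  intro hy
  obtain ⟨g, hz, rfl⟩ := mem_orbit_stabilizer.mp hy
  refine h ?_
  rw [← hinv g x z, hz]

variable [Finite α]

theorem ncard_distinguishers_le_mul_dist (hΓ : Γ.Connected)
    (hadj : ∀ a b, Γ.Adj a b → (distinguishers G a b).ncard ≤ c) (x y : α) :
    (distinguishers G x y).ncard ≤ c * Γ.dist x y := by
  obtain ⟨w, hw⟩ := hΓ.exists_walk_length_eq_dist x y
  rw [← hw]
  clear hw
  induction w with
  | nil => simp [distinguishers_self]
  | @cons u v w huv p ih =>
    calc (distinguishers G u w).ncard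
        ≤ (distinguishers G u v ∪ distinguishers G v w).ncard :=
          Set.ncard_le_ncard (distinguishers_subset_union G u v w)
      _ ≤ (distinguishers G u v).ncard + (distinguishers G v w).ncard := Set.ncard_union_le _ _
      _ ≤ c + c * p.length := Nat.add_le_add (hadj u v huv) ih
      _ = c * (SimpleGraph.Walk.cons huv p).length := by
        rw [SimpleGraph.Walk.length_cons]; ring

theorem dist_le_of_ncard_distinguishers_le (hΓ : Γ.Connected)
    (hinv : ∀ (g : G) a b, Γ.dist (g • a) (g • b) = Γ.dist a b)
    (hadj : ∀ a b, Γ.Adj a b → (distinguishers G a b).ncard ≤ c) (x y : α) :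
    Γ.dist x y ≤ c := by
  obtain rfl | hxy := eq_or_ne x y
  · simp
  obtain ⟨v, hxv, hdist⟩ := exists_adj_and_dist_eq_add_one hΓ hxy
  have hsub : Set.Iio (Γ.dist x y) ⊆ Γ.dist v '' distinguishers G x v := by
    intro i hi
    rw [Set.mem_Iio] at hi
    obtain ⟨w, hvw, hwy⟩ := exists_dist_eq_and_add_dist_eq hΓ (show i ≤ Γ.dist v y by omega)
    refine ⟨w, mem_distinguishers_of_dist_ne hinv ?_, hvw⟩
    have := hΓ.dist_triangle (u := x) (v := w) (w := y)
    omega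
  calc Γ.dist x y = (Set.Iio (Γ.dist x y)).ncard := by simp [Set.ncard_eq_toFinset_card']
    _ ≤ (Γ.dist v '' distinguishers G x v).ncard := Set.ncard_le_ncard hsub
    _ ≤ (distinguishers G x v).ncard := Set.ncard_image_le
    _ ≤ c := hadj x v hxv

theorem ncard_neighborSet_le_of_three_le_dist (hΓ : Γ.Connected)
    (hinv : ∀ (g : G) a b, Γ.dist (g • a) (g • b) = Γ.dist a b)
    (hadj : ∀ a b, Γ.Adj a b → (distinguishers G a b).ncard ≤ c) {x y : α}
    (hxy : 3 ≤ Γ.dist x y) : (Γ.neighborSet x).ncard ≤ 3 * c := by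
  obtain ⟨w, hxw, -⟩ := exists_dist_eq_and_add_dist_eq hΓ hxy
  have hsub : Γ.neighborSet x ⊆ distinguishers G x w := by
    intro v hv
    have hxv : Γ.dist x v = 1 := SimpleGraph.dist_eq_one_iff_adj.mpr hv
    refine mem_distinguishers_of_dist_ne hinv ?_
    have := hΓ.dist_triangle (u := x) (v := v) (w := w)
    rw [SimpleGraph.dist_comm (u := w)]
    omega
  calc (Γ.neighborSet x).ncard ≤ (distinguishers G x w).ncard := Set.ncard_le_ncard hsub
    _ ≤ c * Γ.dist x w := ncard_distinguishers_le_mul_dist hΓ hadj x w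
    _ = 3 * c := by rw [hxw, mul_comm]

theorem ncard_orbit_stabilizer_le_of_three_le_dist (hΓ : Γ.Connected)
    (hinv : ∀ (g : G) a b, Γ.dist (g • a) (g • b) = Γ.dist a b)
    (hadj : ∀ a b, Γ.Adj a b → (distinguishers G a b).ncard ≤ c) {x y : α}
    (hxy : 3 ≤ Γ.dist x y) : (orbit (stabilizer G x) y).ncard ≤ 3 * c ^ 2 := by
  have hcover : orbit (stabilizer G x) y ⊆ ⋃ v ∈ Γ.neighborSet x, distinguishers G x v := by
    intro z hz
    obtain ⟨g, hgx, rfl⟩ := mem_orbit_stabilizer.mp hz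
    have hdist : Γ.dist x (g • y) = Γ.dist x y := by rw [← hinv g x y, hgx]
    have hne : x ≠ g • y := by
      rintro h
      rw [← h, SimpleGraph.dist_self] at hdist
      omega
    obtain ⟨v, hxv, hv⟩ := exists_adj_and_dist_eq_add_one hΓ hne
    exact Set.mem_biUnion hxv (mem_distinguishers_of_dist_ne hinv (by omega))
  calc (orbit (stabilizer G x) y).ncard
      ≤ (⋃ v ∈ Γ.neighborSet x, distinguishers G x v).ncard := Set.ncard_le_ncard hcover
    _ ≤ (Γ.neighborSet x).ncard * c :=
      ncard_biUnion_le_ncard_mul (Set.toFinite _) _ fun v hv => hadj x v hv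
    _ ≤ 3 * c * c :=
      Nat.mul_le_mul_right c (ncard_neighborSet_le_of_three_le_dist hΓ hinv hadj hxy)
    _ = 3 * c ^ 2 := by ring

end InvariantGraph

end Distinguishers

section OrbitalGraph

variable (G : Type*) {α : Type*} [Group G] [MulAction G α]

/-- The orbital graph of `(p, q)`: the undirected graph whose edges are the images of `{p, q}`
under `G`. -/
def orbitalGraph (p q : α) : SimpleGraph α :=
  SimpleGraph.fromRel fun a b => (a, b) ∈ orbit G (p, q)

theorem orbitalGraph_adj_smul_iff (p q : α) (g : G) {a b : α} :
    (orbitalGraph G p q).Adj (g • a) (g • b) ↔ (orbitalGraph G p q).Adj a b := by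
  have hmem (a b : α) : (g • a, g • b) ∈ orbit G (p, q) ↔ (a, b) ∈ orbit G (p, q) := by
    rw [← Prod.smul_mk, ← orbit_eq_iff, orbit_smul, orbit_eq_iff]
  simp only [orbitalGraph, SimpleGraph.fromRel_adj, hmem, ne_eq, smul_left_cancel_iff]

theorem orbitalGraph_dist_smul (p q : α) (g : G) (a b : α) :
    (orbitalGraph G p q).dist (g • a) (g • b) = (orbitalGraph G p q).dist a b :=
  dist_map_iso (Γ := orbitalGraph G p q) ⟨MulAction.toPerm g, orbitalGraph_adj_smul_iff G p q g⟩ a b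

theorem orbitalGraph_connected [IsPreprimitive G α] {p q : α} (hpq : p ≠ q) :
    (orbitalGraph G p q).Connected := by
  have hadj : (orbitalGraph G p q).Adj p q :=
    (SimpleGraph.fromRel_adj _ p q).mpr ⟨hpq, Or.inl (mem_orbit_self _)⟩
  have htop : (orbitalGraph G p q).reachableSetoid = ⊤ :=
    setoid_eq_top_of_isPreprimitive (G := G) _
      (fun g _ _ h => h.map ⟨(g • ·), (orbitalGraph_adj_smul_iff G p q g).mpr⟩) hpq hadj.reachable
  exact { preconnected := Setoid.eq_top_iff.mp htop, nonempty := ⟨p⟩ }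

variable {G}

theorem ncard_distinguishers_of_orbitalGraph_adj {p q a b : α}
    (h : (orbitalGraph G p q).Adj a b) :
    (distinguishers G a b).ncard = (distinguishers G p q).ncard := by
  obtain ⟨-, ⟨g, hg⟩ | ⟨g, hg⟩⟩ := (SimpleGraph.fromRel_adj _ a b).mp h
  all_goals
    obtain ⟨rfl, rfl⟩ := Prod.mk.inj hg
    simp only [distinguishers_comm G (g • q), distinguishers_smul, Set.ncard_smul_set]

end OrbitalGraph

section Dominance

variable (G : Type*) {α : Type*} [Group G] [MulAction G α]

/-- `(x, y)` is dominant if the orbit of `y` under the stabilizer of `x` contains more than two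
thirds of all points. -/
def IsDominant (x y : α) : Prop := 2 * Nat.card α < 3 * (orbit (stabilizer G x) y).ncard

/-- The points which do not form a dominant pair with `x`. -/
def nondominantSet (x : α) : Set α := {y | ¬ IsDominant G x y}

variable {G}

theorem isDominant_smul_iff (g : G) {x y : α} :
    IsDominant G (g • x) (g • y) ↔ IsDominant G x y := by
  rw [IsDominant, IsDominant, orbit_stabilizer_smul, Set.ncard_smul_set]

theorem isDominant_congr_right {x y z : α} (h : z ∈ orbit (stabilizer G x) y) :
    IsDominant G x z ↔ IsDominant G x y := by
  rw [IsDominant, IsDominant, orbit_eq_iff.mpr h]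

theorem not_isDominant_self [Nontrivial α] [Finite α] (x : α) : ¬ IsDominant G x x := by
  have horbit : orbit (stabilizer G x) x = {x} :=
    Set.eq_singleton_iff_unique_mem.mpr ⟨mem_orbit_self x, by rintro _ ⟨g, rfl⟩; exact g.2⟩
  have := Finite.one_lt_card (α := α)
  rw [IsDominant, horbit, Set.ncard_singleton]
  omega

theorem nondominantSet_smul (g : G) (x : α) :
    nondominantSet G (g • x) = g • nondominantSet G x := by
  ext y
  have h := isDominant_smul_iff g (x := x) (y := g⁻¹ • y)
  rw [smul_inv_smul] at h
  rw [Set.mem_smul_set_iff_inv_smul_mem]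
  exact not_congr h

theorem ncard_nondominantSet_eq [IsPretransitive G α] (x y : α) :
    (nondominantSet G x).ncard = (nondominantSet G y).ncard := by
  obtain ⟨g, rfl⟩ := exists_smul_eq G y x
  rw [nondominantSet_smul, Set.ncard_smul_set]

variable [Finite α]

theorem IsDominant.mem_orbit {x y z : α} (hy : IsDominant G x y) (hz : IsDominant G x z) :
    z ∈ orbit (stabilizer G x) y := by
  obtain heq | hdisj := orbit.eq_or_disjoint (G := stabilizer G x) z y
  · exact orbit_eq_iff.mp heq
  · have hcard := Set.ncard_union_eq hdisj
    have hle := Set.ncard_le_card (orbit (stabilizer G x) z ∪ orbit (stabilizer G x) y)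
    unfold IsDominant at hy hz
    omega

theorem isDominant_comm [IsPretransitive G α] {x y : α} :
    IsDominant G x y ↔ IsDominant G y x := by
  rw [IsDominant, IsDominant, ncard_orbit_stabilizer_comm]

theorem IsDominant.exists_smul_eq [IsPretransitive G α] {a b x y : α} (hab : IsDominant G a b)
    (hxy : IsDominant G x y) : ∃ g : G, g • a = x ∧ g • b = y := by
  obtain ⟨g, rfl⟩ := MulAction.exists_smul_eq G a x
  obtain ⟨h, hh, rfl⟩ := mem_orbit_stabilizer.mp (((isDominant_smul_iff g).mpr hab).mem_orbit hxy)
  exact ⟨h * g, by rw [mul_smul, hh], mul_smul h g b⟩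

theorem isMultiplyPretransitive_two_of_forall_isDominant [IsPretransitive G α]
    (h : ∀ x y : α, x ≠ y → IsDominant G x y) : IsMultiplyPretransitive G α 2 :=
  is_two_pretransitive_iff.mpr fun hab hcd => (h _ _ hab).exists_smul_eq (h _ _ hcd)

theorem IsDominant.two_mul_card_lt {x y : α} (h : IsDominant G x y) :
    2 * Nat.card α < 3 * (nondominantSet G x)ᶜ.ncard := by
  have hsub : orbit (stabilizer G x) y ⊆ (nondominantSet G x)ᶜ :=
    fun _ hz hzx => hzx ((isDominant_congr_right hz).mpr h)
  have := Set.ncard_le_ncard hsub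
  unfold IsDominant at h
  omega

theorem sdiff_nondominantSet_subset_distinguishers [IsPretransitive G α] (x y : α) :
    nondominantSet G x \ nondominantSet G y ⊆ distinguishers G x y := by
  rintro z ⟨hzx, hzy⟩ hmem
  refine hzx (isDominant_comm.mp ((isDominant_congr_right hmem).mp ?_))
  exact isDominant_comm.mp (not_not.mp hzy)

theorem exists_card_le_three_mul_ncard_distinguishers {x : α}
    (h : ∀ z, ¬ IsDominant G z x) : ∃ y, Nat.card α ≤ 3 * (distinguishers G x y).ncard := by
  have : Nonempty α := ⟨x⟩
  obtain ⟨y, hy⟩ := Finite.exists_max fun y => (distinguishers G x y).ncard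
  refine ⟨y, ?_⟩
  have hthird (z : α) : (Nat.card α + 2) / 3 ≤ (orbit (stabilizer G z) x)ᶜ.ncard := by
    have hz := h z
    have := Set.ncard_add_ncard_compl (orbit (stabilizer G z) x)
    unfold IsDominant at hz
    omega
  have hcount := ncard_mul_le_ncard_mul Set.finite_univ Set.finite_univ
    (fun z y => y ∉ orbit (stabilizer G z) x)
    (fun z _ => by simp only [Set.mem_univ, true_and]; exact hthird z)
    (fun y' _ => by simp only [Set.mem_univ, true_and]; exact hy y')
  have := Nat.le_of_mul_le_mul_left hcount (Set.ncard_univ α ▸ Nat.card_pos)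
  omega

theorem IsDominant.exists_not_isDominant_not_isDominant [IsPreprimitive G α] {p q x y : α}
    (hxy : IsDominant G x y) (hpq : p ≠ q) (hnd : ¬ IsDominant G p q) :
    ∃ z, ¬ IsDominant G x z ∧ ¬ IsDominant G z y := by
  have : Nontrivial α := ⟨p, q, hpq⟩
  by_contra! hcon
  let s : Setoid α :=
    { r := fun a b => ¬ IsDominant G a b
      iseqv :=
        { refl := not_isDominant_self
          symm := fun h => isDominant_comm.not.mp h
          trans := by
            intro a b c hab hbc hac
            obtain ⟨g, rfl, rfl⟩ := hac.exists_smul_eq hxy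
            exact (isDominant_smul_iff g).not.mpr hbc
              (hcon (g • b) ((isDominant_smul_iff g).not.mpr hab)) } }
  have htop : s = ⊤ := setoid_eq_top_of_isPreprimitive (G := G) s
    (fun g _ _ h => (isDominant_smul_iff g).not.mpr h) hpq hnd
  exact Setoid.eq_top_iff.mp htop x y hxy

theorem ncard_compl_nondominantSet_le [IsPreprimitive G α] {p q : α} (hpq : p ≠ q)
    (hnd : ¬ IsDominant G p q) (x : α) :
    (nondominantSet G x)ᶜ.ncard ≤ (nondominantSet G x).ncard ^ 2 := by
  have hcover : (nondominantSet G x)ᶜ ⊆ ⋃ z ∈ nondominantSet G x, nondominantSet G z := by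
    intro y hy
    obtain ⟨z, hxz, hzy⟩ := (not_not.mp hy).exists_not_isDominant_not_isDominant hpq hnd
    exact Set.mem_biUnion hxz hzy
  rw [sq]
  exact (Set.ncard_le_ncard hcover).trans <| ncard_biUnion_le_ncard_mul (Set.toFinite _) _
    fun z _ => (ncard_nondominantSet_eq z x).le

theorem IsDominant.exists_two_mul_ncard_inter_le [IsPretransitive G α] {x y : α}
    (hxy : IsDominant G x y) :
    ∃ z, IsDominant G x z ∧
      2 * (nondominantSet G x ∩ nondominantSet G z).ncard ≤ (nondominantSet G x).ncard := by
  set k := (nondominantSet G x).ncard with hk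
  by_contra! hcon
  have hcount := ncard_mul_le_ncard_mul (Set.toFinite (nondominantSet G x)ᶜ)
    (Set.toFinite (nondominantSet G x)) (fun z w => w ∈ nondominantSet G z)
    (m := (k + 1) / 2) (n := k)
    (fun z hz => by
      have := hcon z (not_not.mp hz)
      change _ ≤ (nondominantSet G x ∩ nondominantSet G z).ncard
      omega)
    (fun w _ => by
      rw [hk, ncard_nondominantSet_eq x w]
      exact Set.ncard_le_ncard fun z hz => isDominant_comm.not.mp hz.2)
  have hadd := Set.ncard_add_ncard_compl (nondominantSet G x)
  have hlarge := hxy.two_mul_card_lt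
  have hpos : 0 < k := by
    have := hcon y hxy
    have := Set.ncard_le_ncard (Set.inter_subset_left (s := nondominantSet G x)
      (t := nondominantSet G y))
    omega
  have hhalf : k ≤ 2 * ((k + 1) / 2) := by omega
  nlinarith

theorem IsDominant.card_le_six_mul_sq [IsPreprimitive G α] {x y p q : α}
    (hxy : IsDominant G x y) (hpq : p ≠ q) (hnd : ¬ IsDominant G p q) {m : ℕ}
    (hm : ∀ a b : α, IsDominant G a b → (distinguishers G a b).ncard ≤ m) :
    Nat.card α ≤ 6 * m ^ 2 := by
  obtain ⟨z, hxz, hinter⟩ := hxy.exists_two_mul_ncard_inter_le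
  have hk : (nondominantSet G x).ncard ≤ 2 * m := by
    have hsdiff := Set.ncard_le_ncard (sdiff_nondominantSet_subset_distinguishers (G := G) x z)
    have hadd := Set.ncard_inter_add_ncard_sdiff_eq_ncard (nondominantSet G x) (nondominantSet G z)
    have := hm x z hxz
    omega
  have hlarge := hxy.two_mul_card_lt
  have hsq := ncard_compl_nondominantSet_le hpq hnd x
  nlinarith

end Dominance

section Bound

variable {G α : Type*} [Group G] [MulAction G α] [Finite α]

theorem IsDominant.card_le_of_not_isDominant [IsPreprimitive G α] {x y u v p q : α}
    (hxy : IsDominant G x y) (huv : u ≠ v) (hnd : ¬ IsDominant G u v) (hpq : p ≠ q) :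
    Nat.card α ≤ 24 * (distinguishers G p q).ncard ^ 2 := by
  have hΓ := orbitalGraph_connected G hpq
  have hinv := orbitalGraph_dist_smul G p q
  have hadj (a b : α) (h : (orbitalGraph G p q).Adj a b) :=
    (ncard_distinguishers_of_orbitalGraph_adj h).le
  by_cases! hfar : ∃ a b, IsDominant G a b ∧ 3 ≤ (orbitalGraph G p q).dist a b
  · obtain ⟨a, b, hab, hdist⟩ := hfar
    have := ncard_orbit_stabilizer_le_of_three_le_dist hΓ hinv hadj hdist
    unfold IsDominant at hab
    omega
  · have := hxy.card_le_six_mul_sq huv hnd (m := (distinguishers G p q).ncard * 2) fun a b hab =>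
      (ncard_distinguishers_le_mul_dist hΓ hadj a b).trans
        (Nat.mul_le_mul_left _ (Nat.le_of_lt_succ (hfar a b hab)))
    linarith

theorem card_le_of_not_isMultiplyPretransitive_two [IsPreprimitive G α]
    (h : ¬ IsMultiplyPretransitive G α 2) {p q : α} (hpq : p ≠ q) :
    Nat.card α ≤ 24 * (distinguishers G p q).ncard ^ 2 := by
  by_cases! hdom : ∃ x y : α, IsDominant G x y
  · obtain ⟨x, y, hxy⟩ := hdom
    obtain ⟨u, v, huv, hnd⟩ : ∃ u v : α, u ≠ v ∧ ¬ IsDominant G u v := by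
      contrapose! h
      exact isMultiplyPretransitive_two_of_forall_isDominant h
    exact hxy.card_le_of_not_isDominant huv hnd hpq
  · set c := (distinguishers G p q).ncard
    have hΓ := orbitalGraph_connected G hpq
    have hadj (a b : α) (h : (orbitalGraph G p q).Adj a b) :=
      (ncard_distinguishers_of_orbitalGraph_adj h).le
    obtain ⟨y, hy⟩ := exists_card_le_three_mul_ncard_distinguishers (hdom · p)
    calc Nat.card α ≤ 3 * (distinguishers G p y).ncard := hy
      _ ≤ 3 * (c * (orbitalGraph G p q).dist p y) :=
        Nat.mul_le_mul_left 3 (ncard_distinguishers_le_mul_dist hΓ hadj p y)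
      _ ≤ 3 * (c * c) := Nat.mul_le_mul_left 3 <| Nat.mul_le_mul_left c <|
        dist_le_of_ncard_distinguishers_le hΓ (orbitalGraph_dist_smul G p q) hadj p y
      _ ≤ 24 * c ^ 2 := by nlinarith

end Bound

section ThreeCycle

variable {α : Type*} [DecidableEq α]

theorem commutatorElement_eq_swap_mul_swap {σ τ : Equiv.Perm α} {a : α}
    (h : ∀ x, σ x ≠ x → τ x ≠ x → x = a) (ha : τ a ≠ a) :
    ⁅σ, τ⁆ = Equiv.swap (σ a) (τ a) * Equiv.swap a (τ a) := by
  have hσ : σ (τ a) = τ a := by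
    by_contra hne
    exact ha (h (τ a) hne (by simpa using ha))
  -- `τ = swap a (τ a) * ρ` with `ρ` disjoint from `σ`, so conjugating by `σ` only changes the swap.
  have hdisj : Equiv.Perm.Disjoint σ (Equiv.swap a (τ a) * τ) := by
    intro x
    by_cases hx : σ x = x
    · exact Or.inl hx
    · right
      obtain rfl | hxa := eq_or_ne x a
      · simp
      · have hτx : τ x = x := by
          by_contra hne
          exact hxa (h x hx hne)
        rw [Equiv.Perm.mul_apply, hτx, Equiv.swap_apply_of_ne_of_ne hxa]
        rintro rfl
        exact hx hσ
  have hcomm : σ * τ * σ⁻¹ = Equiv.swap (σ a) (τ a) * (Equiv.swap a (τ a) * τ) := by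
    rw [mul_inv_eq_iff_eq_mul, mul_assoc, ← hdisj.commute.eq, ← mul_assoc (Equiv.swap (σ a) (τ a))]
    conv_rhs => rw [← hσ, ← Equiv.mul_swap_eq_swap_mul, hσ]
    rw [mul_assoc, Equiv.swap_mul_self_mul]
  rw [commutatorElement_def, hcomm, ← mul_assoc, mul_inv_cancel_right]

variable [Fintype α]

theorem isThreeCycle_commutatorElement {σ τ : Equiv.Perm α} {a : α}
    (h : σ.support ∩ τ.support = {a}) : ⁅σ, τ⁆.IsThreeCycle := by
  have hmeet (x : α) : σ x ≠ x ∧ τ x ≠ x ↔ x = a := by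
    simpa using Finset.ext_iff.mp h x
  obtain ⟨hσ, hτ⟩ := (hmeet a).mpr rfl
  have hστ : σ a ≠ τ a := fun heq =>
    hσ ((hmeet (σ a)).mp ⟨by simpa using hσ, by rw [heq]; simpa using hτ⟩)
  rw [commutatorElement_eq_swap_mul_swap (fun x hx hx' => (hmeet x).mp ⟨hx, hx'⟩) hτ,
    Equiv.swap_comm (σ a), Equiv.swap_comm a]
  exact isThreeCycle_swap_mul_swap_same hστ.symm hτ hσ

theorem exists_isThreeCycle_mem {G : Subgroup (Equiv.Perm α)} [IsMultiplyPretransitive G α 2]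
    {σ : Equiv.Perm α} (hσ : σ ∈ G) (hσ1 : σ ≠ 1) (hcard : σ.support.card ^ 2 < Fintype.card α) :
    ∃ τ ∈ G, τ.IsThreeCycle := by
  obtain ⟨a, ha⟩ := Finset.nonempty_iff_ne_empty.mpr (mt support_eq_empty_iff.mp hσ1)
  obtain ⟨⟨g, hgG⟩, hga, hg⟩ := exists_smul_eq_self_and_forall_smul_notMem (G := G) ha
    (by simpa [ENat.card_eq_coe_fintype_card] using mod_cast hcard)
  have hconj : (g * σ * g⁻¹).support = σ.support.map g.toEmbedding := support_conj
  have hmeet : σ.support ∩ (g * σ * g⁻¹).support = {a} := by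
    rw [hconj]
    ext x
    rw [Finset.mem_inter, Finset.mem_map, Finset.mem_singleton]
    constructor
    · rintro ⟨hgx, x, hx, rfl⟩
      by_contra hne
      exact hg x hx (fun h => hne (h ▸ hga)) hgx
    · rintro rfl
      exact ⟨ha, x, ha, hga⟩
  refine ⟨⁅σ, g * σ * g⁻¹⁆, ?_, isThreeCycle_commutatorElement hmeet⟩
  have hτ := G.mul_mem (G.mul_mem hgG hσ) (G.inv_mem hgG)
  exact G.mul_mem (G.mul_mem (G.mul_mem hσ hτ) (G.inv_mem hσ)) (G.inv_mem hτ)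

end ThreeCycle

end PrimitiveGroup

open PrimitiveGroup in
theorem jordan_class_primitive_groups_general {α : Type*} [Fintype α] [DecidableEq α]
    {G : Subgroup (Equiv.Perm α)} [MulAction.IsPreprimitive G α] (hG : ¬ alternatingGroup α ≤ G)
    {σ : Equiv.Perm α} (hσ : σ ∈ G) (hσ1 : σ ≠ 1) :
    Fintype.card α ≤ 24 * σ.support.card ^ 2 := by
  by_cases h2 : MulAction.IsMultiplyPretransitive G α 2
  · by_contra! hlt
    obtain ⟨τ, hτ, hcycle⟩ := exists_isThreeCycle_mem hσ hσ1 (by omega)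
    exact hG (Equiv.Perm.alternatingGroup_le_of_isPreprimitive_of_isThreeCycle_mem ‹_› hcycle hτ)
  · obtain ⟨p, hp⟩ := Finset.nonempty_iff_ne_empty.mpr (mt Equiv.Perm.support_eq_empty_iff.mp hσ1)
    rw [Equiv.Perm.mem_support] at hp
    have hsub : distinguishers G p (σ p) ⊆ σ.support := fun x hx => by
      simpa using distinguishers_smul_right_subset (⟨σ, hσ⟩ : G) p hx
    calc Fintype.card α = Nat.card α := Nat.card_eq_fintype_card.symm
      _ ≤ 24 * (distinguishers G p (σ p)).ncard ^ 2 :=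
        card_le_of_not_isMultiplyPretransitive_two h2 hp.symm
      _ ≤ 24 * σ.support.card ^ 2 := by
        gcongr
        simpa using Set.ncard_le_ncard hsub

/-- **Jordan's finiteness theorem on the class of primitive groups.** There is an absolute
constant `A > 0` such that for every `n` and every primitive subgroup `G` of `S_n`
(transitive and with no nontrivial blocks) not containing the alternating group `A_n`,
if `c` is the class of `G` (the least number `c > 1` of points moved by a non-identity
element of `G`), then `n ≤ A · c² · log c`. -/
theorem jordan_class_primitive_groups :
    ∃ A : ℝ, 0 < A ∧
      ∀ (n : ℕ) (G : Subgroup (Equiv.Perm (Fin n))),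
        MulAction.IsPretransitive G (Fin n) →
        (∀ B : Set (Fin n), MulAction.IsBlock G B → B.Subsingleton ∨ B = Set.univ) →
        ¬ alternatingGroup (Fin n) ≤ G →
        ∀ c : ℕ,
          IsLeast {d : ℕ | 1 < d ∧
            ∃ σ : Equiv.Perm (Fin n), σ ∈ G ∧ σ ≠ 1 ∧ σ.support.card = d} c →
          (n : ℝ) ≤ A * (c : ℝ) ^ 2 * Real.log c := by
  refine ⟨48, by norm_num, ?_⟩
  rintro n G htrans hblock hG c ⟨⟨hc, σ, hσ, hσ1, rfl⟩, -⟩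
  have : MulAction.IsPreprimitive G (Fin n) :=
    { htrans with isTrivialBlock_of_isBlock := fun hB => hblock _ hB }
  have hn := jordan_class_primitive_groups_general hG hσ hσ1
  rw [Fintype.card_fin] at hn
  set c := σ.support.card
  have hlog : 1 / 2 ≤ Real.log c :=
    (by linarith [Real.log_two_gt_d9] : (1 / 2 : ℝ) ≤ Real.log 2).trans
      (Real.log_le_log two_pos (mod_cast hc))
  calc (n : ℝ) ≤ 48 * (c : ℝ) ^ 2 * (1 / 2) := by
        have : (n : ℝ) ≤ 24 * (c : ℝ) ^ 2 := mod_cast hn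
        linarith
    _ ≤ 48 * (c : ℝ) ^ 2 * Real.log c := by gcongr
end

section
/- Every finite subgroup of PGL(2, ℂ) = GL(2, ℂ)/{scalar matrices} is isomorphic to a cyclic group, a dihedral group, the alternating group A₄, the symmetric group S₄, or the alternating group A₅ (the Jordan–Klein classification of finite groups of binary linear fractional substitutions, corresponding to the rotation groups of the regular solids). -/
/-!
Over an algebraically closed field `K`, a nontrivial element of `PGL(2, K)` whose order is
invertible in `K` fixes exactly two points of the projective line: moving one fixed point to `∞`, it
becomes `z ↦ μ * z + b`, and `μ ≠ 1`, since a translation has no such order. For the same reason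
`μ` embeds the stabilizer of a point in a finite group `G` into the multiplicative group of `K`, so
point stabilizers in `G` are cyclic.

Count the orbits of `G` on the finite set of poles, the points with nontrivial stabilizer, by
Burnside's lemma. There are two or three orbits. If there are two, `G` fixes a point and is cyclic;
if there are three, the stabilizer orders are `(2, 2, n)`, `(2, 3, 3)`, `(2, 3, 4)` or `(2, 3, 5)`.
The dihedral group is found from its cyclic subgroup of index two, `A₄` from its action on an orbit
of four poles, `S₄` from its action on its Sylow 3-subgroups and `A₅` from its action on its Sylow
2-subgroups.
-/

namespace Polyhedral

open MulAction

/-- The groups of the Jordan–Klein classification: up to isomorphism, the cyclic and dihedral groups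
and the rotation groups of the tetrahedron, the octahedron and the icosahedron. The condition
`0 < m` excludes `DihedralGroup 0`, which is infinite. -/
def IsPolyhedralGroup (G : Type*) [Group G] : Prop :=
  IsCyclic G ∨
  (∃ m : ℕ, 0 < m ∧ Nonempty (G ≃* DihedralGroup m)) ∨
  Nonempty (G ≃* alternatingGroup (Fin 4)) ∨
  Nonempty (G ≃* Equiv.Perm (Fin 4)) ∨
  Nonempty (G ≃* alternatingGroup (Fin 5))

section Recognition

variable {G : Type*} [Group G]

/-- The homomorphism from a dihedral group which is `ρ` on rotations and sends the reflection
`sr 0` to `s`; it recognizes as dihedral the groups for which it can be made bijective. -/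
def dihedralLift {n : ℕ} (ρ : Multiplicative (ZMod n) →* G) (s : G) (hs : s * s = 1)
    (hρ : ∀ i, ρ i * s = s * (ρ i)⁻¹) : DihedralGroup n →* G where
  toFun
    | .r i => ρ (.ofAdd i)
    | .sr i => s * ρ (.ofAdd i)
  map_one' := map_one ρ
  map_mul' := by
    rintro (i | i) (j | j)
    · exact map_mul ρ _ _
    · change s * ρ (.ofAdd (j - i)) = ρ (.ofAdd i) * (s * ρ (.ofAdd j))
      rw [← mul_assoc, hρ, mul_assoc, ← map_inv, ← map_mul, ← ofAdd_neg, ← ofAdd_add,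
        neg_add_eq_sub]
    · change s * ρ (.ofAdd (i + j)) = s * ρ (.ofAdd i) * ρ (.ofAdd j)
      rw [mul_assoc, ← map_mul, ofAdd_add]
    · change ρ (.ofAdd (j - i)) = s * ρ (.ofAdd i) * (s * ρ (.ofAdd j))
      rw [mul_assoc, ← mul_assoc _ s, hρ, mul_assoc s, ← mul_assoc s, hs, one_mul, ← map_inv,
        ← map_mul, ← ofAdd_neg, ← ofAdd_add, neg_add_eq_sub]

lemma mul_eq_mul_inv_of_notMem {C : Subgroup G} (hC : ∀ g ∉ C, g * g = 1) {c s : G}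
    (hc : c ∈ C) (hs : s ∉ C) : c * s = s * c⁻¹ := by
  have hcs : c * s ∉ C := by rwa [C.mul_mem_cancel_left hc]
  rw [eq_inv_of_mul_eq_one_left (hC _ hcs), mul_inv_rev, inv_eq_of_mul_eq_one_left (hC s hs)]

theorem nonempty_mulEquiv_dihedralGroup (C : Subgroup G) [hcyc : IsCyclic C] (hC : C.index = 2)
    (hinv : ∀ g ∉ C, g * g = 1) : Nonempty (G ≃* DihedralGroup (Nat.card C)) := by
  obtain ⟨s, hs⟩ : ∃ s, s ∉ C := SetLike.exists_not_mem_of_ne_top C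
    (by rintro rfl; simp at hC) rfl
  let e := zmodCyclicMulEquiv hcyc
  let φ := dihedralLift (C.subtype.comp e.toMonoidHom) s (hinv s hs)
    fun i => mul_eq_mul_inv_of_notMem hinv (e i).2 hs
  have hφ : Function.Bijective φ := by
    refine ⟨(injective_iff_map_eq_one φ).2 ?_, fun g => ?_⟩
    · rintro (i | i) hi
      · exact congrArg DihedralGroup.r (e.map_eq_one_iff.1 (Subtype.ext hi))
      · exact absurd (eq_inv_of_mul_eq_one_left hi ▸ C.inv_mem (e _).2) hs
    · by_cases hg : g ∈ C
      · exact ⟨.r (e.symm ⟨g, hg⟩), congrArg Subtype.val (e.apply_symm_apply ⟨g, hg⟩)⟩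
      · have hsg : s⁻¹ * g ∈ C := by
          rw [Subgroup.mul_mem_iff_of_index_two hC, inv_mem_iff]
          exact iff_of_false hs hg
        refine ⟨.sr (e.symm ⟨s⁻¹ * g, hsg⟩), ?_⟩
        change s * (e (e.symm ⟨s⁻¹ * g, hsg⟩) : G) = g
        rw [e.apply_symm_apply, mul_inv_cancel_left]
  exact ⟨(MulEquiv.ofBijective φ hφ).symm⟩

section Perm

variable {Y : Type*} [MulAction G Y] [FaithfulSMul G Y] [Finite Y] {n : ℕ}

theorem nonempty_mulEquiv_perm (hY : Nat.card Y = n) (hG : Nat.card G = n.factorial) :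
    Nonempty (G ≃* Equiv.Perm (Fin n)) := by
  have hbij : Function.Bijective (toPermHom G Y) :=
    (Nat.bijective_iff_injective_and_card _).2
      ⟨toPerm_injective, by rw [Nat.card_perm, hY, hG]⟩
  exact ⟨(MulEquiv.ofBijective _ hbij).trans (Finite.equivFinOfCardEq hY).permCongrHom⟩

theorem nonempty_mulEquiv_alternatingGroup (hY : Nat.card Y = n)
    (hG : Nat.card G * 2 = n.factorial) : Nonempty (G ≃* alternatingGroup (Fin n)) := by
  let f : G →* Equiv.Perm (Fin n) :=
    (Finite.equivFinOfCardEq hY).permCongrHom.toMonoidHom.comp (toPermHom G Y)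
  let e : G ≃* f.range :=
    f.ofInjective ((Finite.equivFinOfCardEq hY).permCongrHom.injective.comp toPerm_injective)
  have hindex : f.range.index = 2 := by
    have h := f.range.card_mul_index
    rw [Nat.card_perm, Nat.card_fin, ← hG, Nat.card_congr e.toEquiv] at h
    exact Nat.eq_of_mul_eq_mul_left Nat.card_pos h
  exact ⟨e.trans (MulEquiv.subgroupCongr (Equiv.Perm.eq_alternatingGroup_of_index_eq_two hindex))⟩

end Perm

lemma mem_normalizer_of_centralizer_eq {P : Subgroup G} {g t : G}
    (ht : Subgroup.centralizer {t} = P) (hgt : Subgroup.centralizer {g * t * g⁻¹} = P) :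
    g ∈ Subgroup.normalizer (P : Set G) := by
  refine Subgroup.mem_normalizer_iff.2 fun h => ?_
  nth_rewrite 1 [← ht]
  rw [← hgt]
  simp only [Subgroup.mem_centralizer_singleton_iff]
  exact Commute.conj_iff g |>.symm

theorem card_normalizer_of_centralizer_eq {P : Subgroup G} (hP : P ≠ ⊥)
    (hcent : ∀ t ∈ P, t ≠ 1 → Subgroup.centralizer {t} = P)
    (hconj : ∀ t ∈ P, ∀ s ∈ P, t ≠ 1 → s ≠ 1 → IsConj t s) :
    Nat.card (Subgroup.normalizer (P : Set G)) = (Nat.card P - 1) * Nat.card P := by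
  obtain ⟨t, htP, ht⟩ := P.bot_or_exists_ne_one.resolve_left hP
  let N := Subgroup.normalizer (P : Set G)
  let _ : MulAction N G := MulAction.compHom G (MulAut.conj.comp N.subtype)
  have horbit : orbit N t = (P : Set G) \ {1} := by
    ext s
    constructor
    · rintro ⟨n, rfl⟩
      exact ⟨(Subgroup.mem_normalizer_iff.1 n.2 t).1 htP, fun h => ht (conj_eq_one_iff.1 h)⟩
    · rintro ⟨hsP, hs⟩
      obtain ⟨g, rfl⟩ := isConj_iff.1 (hconj t htP s hsP ht hs)
      exact ⟨⟨g, mem_normalizer_of_centralizer_eq (hcent t htP ht) (hcent _ hsP hs)⟩, rfl⟩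
  have hstab : stabilizer N t = P.subgroupOf N := by
    ext n
    rw [Subgroup.mem_subgroupOf, ← hcent t htP ht, Subgroup.mem_centralizer_singleton_iff]
    exact mul_inv_eq_iff_eq_mul
  rw [← (stabilizer N t).index_mul_card, index_stabilizer, horbit, hstab,
    Set.ncard_sdiff_singleton_of_mem (one_mem P),
    Nat.card_congr (Subgroup.subgroupOfEquivOfLe Subgroup.le_normalizer).toEquiv]
  rfl

section Sylow

variable {p : ℕ}

lemma ker_toPermHom_sylow_le_normalizer (P : Sylow p G) :
    (toPermHom G (Sylow p G)).ker ≤ Subgroup.normalizer (P : Set G) := fun _ hg =>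
  Sylow.smul_eq_iff_mem_normalizer.1 (congrArg (· P) (MonoidHom.mem_ker.1 hg))

variable [Finite G] [Fact p.Prime]

lemma pairwise_disjoint_sylow_of_card_eq (h : ∀ P : Sylow p G, Nat.card P = p) :
    Pairwise fun P Q : Sylow p G => Disjoint (P : Subgroup G) Q := by
  intro P Q hPQ
  rw [disjoint_iff, ← Subgroup.card_eq_one]
  refine ((Nat.dvd_prime Fact.out).1 <|
    (Subgroup.card_dvd_of_le inf_le_left).trans (h P).dvd).resolve_right fun hcard => hPQ ?_
  have hle {R S : Sylow p G} (hR : Nat.card (R ⊓ S : Subgroup G) = p) : (R : Subgroup G) ≤ S :=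
    inf_eq_left.1 (Subgroup.eq_of_le_of_card_ge inf_le_left (by rw [hR, h R]))
  exact Sylow.ext (le_antisymm (hle hcard) (hle (inf_comm (P : Subgroup G) Q ▸ hcard)))

lemma not_dvd_card_ker_toPermHom_sylow [Nontrivial (Sylow p G)]
    (hdisj : Pairwise fun P Q : Sylow p G => Disjoint (P : Subgroup G) Q) :
    ¬ p ∣ Nat.card (toPermHom G (Sylow p G)).ker := by
  intro hdvd
  obtain ⟨⟨g, hg⟩, horder⟩ := exists_prime_orderOf_dvd_card' p hdvd
  rw [Subgroup.orderOf_mk] at horder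
  have hpgroup : IsPGroup p (Subgroup.zpowers g) :=
    IsPGroup.of_card (n := 1) (by rw [Nat.card_zpowers, horder, pow_one])
  have hmem (Q : Sylow p G) : g ∈ (Q : Subgroup G) :=
    ((hpgroup.inf_normalizer_sylow Q).le
      ⟨Subgroup.mem_zpowers g, ker_toPermHom_sylow_le_normalizer Q hg⟩).2
  obtain ⟨P, Q, hPQ⟩ := exists_pair_ne (Sylow p G)
  have hg1 : g = 1 := Subgroup.disjoint_def.1 (hdisj hPQ) (hmem P) (hmem Q)
  exact (Fact.out : p.Prime).ne_one (by rw [← horder, hg1, orderOf_one])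

/- The kernel of the action lies in the normalizer of `P` and has order prime to `p`, hence dividing
`q`; so it is cyclic. -/
theorem faithfulSMul_sylow [Nontrivial (Sylow p G)]
    (hdisj : Pairwise fun P Q : Sylow p G => Disjoint (P : Subgroup G) Q)
    (hbot : ∀ K : Subgroup G, K.Normal → IsCyclic K → K = ⊥) (P : Sylow p G) {a q : ℕ}
    (hq : q.Prime) (hN : Nat.card (Subgroup.normalizer (P : Set G)) = p ^ a * q) :
    FaithfulSMul G (Sylow p G) := by
  let K := (toPermHom G (Sylow p G)).ker
  have hcop : Nat.Coprime (Nat.card K) (p ^ a) :=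
    (((Nat.Prime.coprime_iff_not_dvd Fact.out).2
      (not_dvd_card_ker_toPermHom_sylow hdisj)).pow_left a).symm
  have hKq : Nat.card K ∣ q :=
    hcop.dvd_of_dvd_mul_left (hN ▸ Subgroup.card_dvd_of_le (ker_toPermHom_sylow_le_normalizer P))
  have hKbot : K = ⊥ := by
    rcases (Nat.dvd_prime hq).1 hKq with h | h
    · exact Subgroup.card_eq_one.1 h
    · have : Fact q.Prime := ⟨hq⟩
      exact hbot K inferInstance (isCyclic_of_prime_card h)
  exact ⟨fun h => (MonoidHom.ker_eq_bot_iff _).1 hKbot (Equiv.ext h)⟩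

end Sylow

theorem nonempty_mulEquiv_perm_four (hG : Nat.card G = 24)
    (hbot : ∀ K : Subgroup G, K.Normal → IsCyclic K → K = ⊥) :
    Nonempty (G ≃* Equiv.Perm (Fin 4)) := by
  have : Finite G := Nat.finite_of_card_ne_zero (by lia)
  have : Fact (Nat.Prime 3) := ⟨Nat.prime_three⟩
  have hP (P : Sylow 3 G) : Nat.card P = 3 := by
    rw [P.card_eq_multiplicity, hG]
    decide +kernel
  let P : Sylow 3 G := default
  have hindex : (P : Subgroup G).index = 8 := by
    have := (P : Subgroup G).card_mul_index
    rw [hP P, hG] at this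
    lia
  have : Nontrivial (Sylow 3 G) := by
    by_contra h
    rw [not_nontrivial_iff_subsingleton] at h
    have hone : Nat.card P = 1 := Subgroup.card_eq_one.2
      (hbot P P.normal_of_subsingleton (isCyclic_of_prime_card (hP P)))
    exact absurd ((hP P).symm.trans hone) (by decide)
  have hcard : Nat.card (Sylow 3 G) = 4 := by
    have hdvd : Nat.card (Sylow 3 G) ∣ 8 := hindex ▸ P.card_dvd_index
    have hmod : Nat.card (Sylow 3 G) % 3 = 1 := card_sylow_modEq_one 3 G
    have hone : 1 < Nat.card (Sylow 3 G) := Finite.one_lt_card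
    have hle := Nat.le_of_dvd (by lia) hdvd
    interval_cases Nat.card (Sylow 3 G) <;> lia
  have hN := (Subgroup.normalizer (P : Set G)).card_mul_index
  rw [← P.card_eq_index_normalizer, hcard, hG] at hN
  have := faithfulSMul_sylow (pairwise_disjoint_sylow_of_card_eq hP) hbot P
    Nat.prime_two (a := 1) (by lia)
  exact nonempty_mulEquiv_perm hcard hG

theorem nonempty_mulEquiv_alternatingGroup_five (hG : Nat.card G = 60)
    (hbot : ∀ K : Subgroup G, K.Normal → IsCyclic K → K = ⊥)
    (hcent : ∀ P : Sylow 2 G, ∀ t ∈ (P : Subgroup G), t ≠ 1 → Subgroup.centralizer {t} = P)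
    (hconj : ∀ P : Sylow 2 G, ∀ t ∈ (P : Subgroup G), ∀ s ∈ (P : Subgroup G),
      t ≠ 1 → s ≠ 1 → IsConj t s) :
    Nonempty (G ≃* alternatingGroup (Fin 5)) := by
  have : Finite G := Nat.finite_of_card_ne_zero (by lia)
  have : Fact (Nat.Prime 2) := ⟨Nat.prime_two⟩
  let P : Sylow 2 G := default
  have hP : Nat.card (P : Subgroup G) = 4 := by
    rw [P.card_eq_multiplicity, hG]
    decide +kernel
  have hPbot : (P : Subgroup G) ≠ ⊥ := fun h => by simp [h] at hP
  have hN : Nat.card (Subgroup.normalizer (P : Set G)) = 3 * 4 :=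
    (card_normalizer_of_centralizer_eq hPbot (hcent P) (hconj P)).trans (by rw [hP])
  have hcard : Nat.card (Sylow 2 G) = 5 := by
    have h := (Subgroup.normalizer (P : Set G)).card_mul_index
    rw [← P.card_eq_index_normalizer, hG, hN] at h
    lia
  have : Nontrivial (Sylow 2 G) := Finite.one_lt_card_iff_nontrivial.1 (by lia)
  have hdisj : Pairwise fun P Q : Sylow 2 G => Disjoint (P : Subgroup G) Q := by
    intro P Q hPQ
    refine Subgroup.disjoint_def.2 fun {t} htP htQ => ?_
    by_contra ht
    exact hPQ (Sylow.ext ((hcent P t htP ht).symm.trans (hcent Q t htQ ht)))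
  have := faithfulSMul_sylow hdisj hbot P Nat.prime_three (a := 2) (by rw [hN]; norm_num)
  exact nonempty_mulEquiv_alternatingGroup hcard (by rw [hG]; rfl)

end Recognition

section TwoFixedPoints

/-- Every nontrivial element of `G` fixes exactly two points of `X`, as do the rotations of a
sphere. -/
def HasTwoFixedPoints (G X : Type*) [Group G] [MulAction G X] : Prop :=
  ∀ g : G, g ≠ 1 → (fixedBy X g).ncard = 2

variable {G X : Type*} [Group G] [MulAction G X]

namespace HasTwoFixedPoints

lemma exists_smul_eq (h : HasTwoFixedPoints G X) {g : G} (hg : g ≠ 1) : ∃ x : X, g • x = x :=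
  Set.nonempty_of_ncard_ne_zero (s := fixedBy X g) (by rw [h g hg]; exact two_ne_zero)

lemma ncard_le_two (h : HasTwoFixedPoints G X) {g : G} (hg : g ≠ 1) {s : Set X}
    (hs : ∀ x ∈ s, g • x = x) : s.ncard ≤ 2 :=
  h g hg ▸ Set.ncard_le_ncard hs (Set.finite_of_ncard_ne_zero (by rw [h g hg]; exact two_ne_zero))

lemma faithfulSMul_orbit (h : HasTwoFixedPoints G X) {x : X} (hx : 2 < (orbit G x).ncard) :
    FaithfulSMul G (orbit G x) := by
  refine ⟨fun {g₁ g₂} hg => ?_⟩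
  by_contra hne
  refine hx.not_ge (h.ncard_le_two (mt inv_mul_eq_one.1 hne) fun y hy => ?_)
  rw [mul_smul, inv_smul_eq_iff]
  exact congrArg Subtype.val (hg ⟨y, hy⟩).symm

lemma eq_bot_of_normal_of_isCyclic (h : HasTwoFixedPoints G X)
    (horbit : ∀ x : X, 2 < (orbit G x).ncard) (K : Subgroup G) (hK : K.Normal)
    (hcyc : IsCyclic K) : K = ⊥ := by
  obtain ⟨g, rfl⟩ := (Subgroup.isCyclic_iff_exists_zpowers_eq_top K).1 hcyc
  rw [Subgroup.zpowers_eq_bot]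
  by_contra hg
  obtain ⟨x, hx⟩ := h.exists_smul_eq hg
  have hxK : x ∈ fixedPoints (Subgroup.zpowers g) X := fun k =>
    (Subgroup.zpowers_le.2 hx : Subgroup.zpowers g ≤ stabilizer G x) k.2
  refine (horbit x).not_ge (h.ncard_le_two hg ?_)
  rintro _ ⟨n, rfl⟩
  exact smul_mem_fixedPoints_of_normal n hxK ⟨g, Subgroup.mem_zpowers g⟩

lemma mul_self_eq_one_of_notMem_stabilizer (h : HasTwoFixedPoints G X) {x : X}
    (hx : (orbit G x).ncard = 2) {g : G} (hg : g ∉ stabilizer G x) : g * g = 1 := by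
  have hindex : (stabilizer G x).index = 2 := by rw [index_stabilizer, hx]
  have hgg : (g * g) • x = x := Subgroup.mul_self_mem_of_index_two hindex g
  obtain ⟨y, hy⟩ := h.exists_smul_eq fun hg1 : g = 1 => hg (hg1 ▸ one_mem _)
  have hxy : x ≠ y := fun hxy => hg (hxy ▸ hy)
  have hgxy : g • x ≠ y := fun hgxy => hxy (smul_left_cancel g (hgxy.trans hy.symm))
  by_contra hgg1
  have hcard := h.ncard_le_two hgg1 (s := {x, g • x, y}) <| by
    rintro z (rfl | rfl | rfl)
    · exact hgg
    · rw [smul_smul, mul_assoc, mul_smul, hgg]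
    · rw [mul_smul, hy, hy]
  rw [Set.ncard_eq_three.2 ⟨x, g • x, y, Ne.symm hg, hxy, hgxy, rfl⟩] at hcard
  lia

theorem nonempty_mulEquiv_dihedralGroup (h : HasTwoFixedPoints G X) (x : X)
    [IsCyclic (stabilizer G x)] (hx : (orbit G x).ncard = 2) :
    Nonempty (G ≃* DihedralGroup (Nat.card (stabilizer G x))) :=
  Polyhedral.nonempty_mulEquiv_dihedralGroup _ (by rw [index_stabilizer, hx])
    fun _ => h.mul_self_eq_one_of_notMem_stabilizer hx

theorem nonempty_mulEquiv_alternatingGroup_four (h : HasTwoFixedPoints G X)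
    (hG : Nat.card G = 12) {x : X} (hx : (orbit G x).ncard = 4) :
    Nonempty (G ≃* alternatingGroup (Fin 4)) := by
  have : Finite (orbit G x) := Set.finite_of_ncard_ne_zero (by lia)
  have : FaithfulSMul G (orbit G x) := h.faithfulSMul_orbit (by lia)
  exact nonempty_mulEquiv_alternatingGroup (Y := orbit G x) hx (by rw [hG]; rfl)

lemma card_centralizer_le (h : HasTwoFixedPoints G X) [Finite G] {t : G} (ht : t ≠ 1) {x : X}
    (hx : t • x = x) :
    Nat.card (Subgroup.centralizer {t}) ≤ 2 * Nat.card (stabilizer G x) := by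
  set C := Subgroup.centralizer {t}
  rw [← (stabilizer C x).index_mul_card, index_stabilizer]
  refine Nat.mul_le_mul (h.ncard_le_two ht ?_) ?_
  · rintro _ ⟨c, rfl⟩
    change t • (c : G) • x = (c : G) • x
    rw [smul_smul, ← Subgroup.mem_centralizer_singleton_iff.1 c.2, mul_smul, hx]
  · rw [← Subgroup.card_map_of_injective C.subtype_injective]
    refine Subgroup.card_le_of_le ?_
    rintro _ ⟨c, hc, rfl⟩
    exact hc

section UniqueInvolutionClass

variable {x₀ : X} (hx₀ : Nat.card (stabilizer G x₀) = 2)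
  (horbit : ∀ y : X, 2 ∣ Nat.card (stabilizer G y) → y ∈ orbit G x₀)

include horbit in
lemma exists_smul_eq_of_two_dvd_orderOf (h : HasTwoFixedPoints G X) {t : G} (ht : t ≠ 1)
    (ht2 : 2 ∣ orderOf t) : ∃ a : G, t • a • x₀ = a • x₀ := by
  obtain ⟨y, hy⟩ := h.exists_smul_eq ht
  obtain ⟨a, rfl⟩ := horbit y (ht2.trans (Subgroup.orderOf_dvd_natCard (stabilizer G y) hy))
  exact ⟨a, hy⟩

include hx₀ horbit

lemma isConj_of_two_dvd_orderOf (h : HasTwoFixedPoints G X) {t s : G} (ht : t ≠ 1)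
    (hs : s ≠ 1) (ht2 : 2 ∣ orderOf t) (hs2 : 2 ∣ orderOf s) : IsConj t s := by
  obtain ⟨a, ha⟩ := h.exists_smul_eq_of_two_dvd_orderOf horbit ht ht2
  obtain ⟨b, hb⟩ := h.exists_smul_eq_of_two_dvd_orderOf horbit hs hs2
  let u : stabilizer G x₀ := ⟨a⁻¹ * t * a⁻¹⁻¹, by
    rw [mem_stabilizer_iff, inv_inv, mul_smul, mul_smul, ha, inv_smul_smul]⟩
  let v : stabilizer G x₀ := ⟨b⁻¹ * s * b⁻¹⁻¹, by
    rw [mem_stabilizer_iff, inv_inv, mul_smul, mul_smul, hb, inv_smul_smul]⟩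
  have hu : u ≠ 1 := fun hu => ht (conj_eq_one_iff.1 (congrArg Subtype.val hu))
  have hv : v ≠ 1 := fun hv => hs (conj_eq_one_iff.1 (congrArg Subtype.val hv))
  have huv : u = v := ((Nat.card_eq_two_iff' 1).1 hx₀).unique hu hv
  exact (isConj_iff.2 ⟨a⁻¹, rfl⟩ : IsConj t u).trans
    (huv ▸ (isConj_iff.2 ⟨b⁻¹, rfl⟩ : IsConj s v).symm)

lemma centralizer_eq_of_card_eq_four (h : HasTwoFixedPoints G X) [Finite G] {P : Subgroup G}
    (hP : Nat.card P = 4) {t : G} (htP : t ∈ P) (ht : t ≠ 1) (ht2 : 2 ∣ orderOf t) :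
    Subgroup.centralizer {t} = P := by
  obtain ⟨a, ha⟩ := h.exists_smul_eq_of_two_dvd_orderOf horbit ht ht2
  have hcard : Nat.card (stabilizer G (a • x₀)) = 2 :=
    (Nat.card_congr (stabilizerEquivStabilizer rfl).toEquiv).symm.trans hx₀
  have : IsMulCommutative P :=
    IsPGroup.isMulCommutative_of_card_eq_prime_sq (p := 2) (by rw [hP]; norm_num)
  refine (Subgroup.eq_of_le_of_card_ge ?_ ?_).symm
  · exact P.le_centralizer.trans (Subgroup.centralizer_le (Set.singleton_subset_iff.2 htP))
  · exact (h.card_centralizer_le ht ha).trans (by rw [hcard, hP])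

theorem nonempty_mulEquiv_alternatingGroup_five (h : HasTwoFixedPoints G X)
    (hG : Nat.card G = 60) (hlarge : ∀ x : X, 2 < (orbit G x).ncard) :
    Nonempty (G ≃* alternatingGroup (Fin 5)) := by
  have : Finite G := Nat.finite_of_card_ne_zero (by lia)
  have : Fact (Nat.Prime 2) := ⟨Nat.prime_two⟩
  have heven (P : Sylow 2 G) {t : G} (htP : t ∈ (P : Subgroup G)) (ht : t ≠ 1) :
      2 ∣ orderOf t := by
    rw [← Subgroup.orderOf_mk t htP]
    exact P.isPGroup'.dvd_orderOf (by simpa [Subtype.ext_iff] using ht)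
  refine Polyhedral.nonempty_mulEquiv_alternatingGroup_five hG
    (h.eq_bot_of_normal_of_isCyclic hlarge) (fun P t htP ht => ?_)
    (fun P t htP s hsP ht hs => ?_)
  · refine h.centralizer_eq_of_card_eq_four hx₀ horbit ?_ htP ht (heven P htP ht)
    rw [P.card_eq_multiplicity, hG]
    decide +kernel
  · exact h.isConj_of_two_dvd_orderOf hx₀ horbit ht hs (heven P htP ht) (heven P hsP hs)

end UniqueInvolutionClass

end HasTwoFixedPoints

end TwoFixedPoints

section Counting

variable {G X : Type*} [Group G] [MulAction G X]

lemma ncard_orbit_mul_card_stabilizer (x : X) :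
    (orbit G x).ncard * Nat.card (stabilizer G x) = Nat.card G := by
  rw [← index_stabilizer, Subgroup.index_mul_card]

theorem exists_orbit_representatives [Finite X] {k : ℕ}
    (hk : Nat.card (orbitRel.Quotient G X) = k) :
    ∃ x : Fin k → X, Monotone (fun i => Nat.card (stabilizer G (x i))) ∧
      ∑ i, (orbit G (x i)).ncard = Nat.card X ∧ ∀ y, ∃ i, y ∈ orbit G (x i) := by
  let e : Fin k ≃ orbitRel.Quotient G X := (Finite.equivFinOfCardEq hk).symm
  let σ := Tuple.sort fun i => Nat.card (stabilizer G (e i).out)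
  let e' := σ.trans e
  refine ⟨fun i => (e' i).out, Tuple.monotone_sort fun i => Nat.card (stabilizer G (e i).out), ?_,
    fun y => ⟨e'.symm ⟦y⟧, ?_⟩⟩
  · have := Fintype.ofFinite (orbitRel.Quotient G X)
    rw [Nat.card_congr (selfEquivSigmaOrbits G X), Nat.card_sigma]
    exact e'.sum_comp fun ω => (orbit G ω.out).ncard
  · simp only [e'.apply_symm_apply]
    have hy : (orbitRel G X) (Quotient.mk (orbitRel G X) y).out y := Quotient.mk_out y
    exact mem_orbit_symm.1 hy

namespace HasTwoFixedPoints

variable [Finite G] [Finite X]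

theorem two_mul_card_add_card (h : HasTwoFixedPoints G X) :
    2 * Nat.card G + Nat.card X = Nat.card (orbitRel.Quotient G X) * Nat.card G + 2 := by
  classical
  have := Fintype.ofFinite G
  have := Fintype.ofFinite X
  have := Fintype.ofFinite (orbitRel.Quotient G X)
  have hfixed (g : G) : Fintype.card (fixedBy X g) = if g = 1 then Nat.card X else 2 := by
    rw [← Nat.card_eq_fintype_card, Nat.card_coe_set_eq]
    split_ifs with hg
    · rw [hg, fixedBy_one_eq_univ, Set.ncard_univ]
    · exact h g hg
  have hburnside := sum_card_fixedBy_eq_card_orbits_mul_card_group G X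
  simp only [hfixed, ← Nat.card_eq_fintype_card] at hburnside
  rw [← hburnside, ← Finset.add_sum_erase _ _ (Finset.mem_univ 1), if_pos rfl,
    Finset.sum_congr rfl fun g hg => if_neg (Finset.ne_of_mem_erase hg), Finset.sum_const,
    Finset.card_erase_of_mem (Finset.mem_univ 1), Finset.card_univ, ← Nat.card_eq_fintype_card]
  have : 0 < Nat.card G := Nat.card_pos
  simp only [smul_eq_mul]
  lia

end HasTwoFixedPoints

lemma two_le_card_stabilizer [Finite G] {x : X} (hx : stabilizer G x ≠ ⊥) :
    2 ≤ Nat.card (stabilizer G x) :=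
  (Subgroup.one_lt_card_iff_ne_bot _).2 hx

lemma two_mul_card_le [Finite G] [Finite X] (hX : ∀ x : X, stabilizer G x ≠ ⊥) :
    2 * Nat.card X ≤ Nat.card (orbitRel.Quotient G X) * Nat.card G := by
  obtain ⟨x, -, hsum, -⟩ := exists_orbit_representatives (G := G) (X := X) rfl
  have hle (y : X) : (orbit G y).ncard * 2 ≤ Nat.card G :=
    (Nat.mul_le_mul_left _ (two_le_card_stabilizer (hX y))).trans_eq
      (ncard_orbit_mul_card_stabilizer y)
  rw [← hsum, mul_comm, Finset.sum_mul]
  simpa using Finset.sum_le_card_nsmul Finset.univ _ _ fun i _ => hle (x i)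

lemma HasTwoFixedPoints.card_orbits_eq_two_or_three [Finite G] [Finite X] [Nontrivial G]
    (h : HasTwoFixedPoints G X) (hX : ∀ x : X, stabilizer G x ≠ ⊥) :
    Nat.card (orbitRel.Quotient G X) = 2 ∨ Nat.card (orbitRel.Quotient G X) = 3 := by
  have hG : 1 < Nat.card G := Finite.one_lt_card
  have hburnside := h.two_mul_card_add_card
  have hupper := two_mul_card_le hX
  have hlower : Nat.card (orbitRel.Quotient G X) ≤ Nat.card X :=
    Nat.card_le_card_of_surjective (Quotient.mk _) Quotient.mk_surjective
  have hlt : Nat.card (orbitRel.Quotient G X) < 4 := by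
    by_contra! hge
    have := Nat.mul_le_mul_right (Nat.card G) hge
    lia
  interval_cases Nat.card (orbitRel.Quotient G X) <;> lia

/- Divided by `N`, `hsum` says `1 / p + 1 / q + 1 / r = 1 + 2 / N`; the four cases are
`(p, q, r) = (2, 2, r), (2, 3, 3), (2, 3, 4), (2, 3, 5)`. -/
lemma signature_cases {N a b c p q r : ℕ} (ha : a * p = N) (hb : b * q = N)
    (hc : c * r = N) (hp : 2 ≤ p) (hpq : p ≤ q) (hqr : q ≤ r) (hsum : a + b + c = N + 2) :
    c = 2 ∨ (N = 12 ∧ c = 4) ∨ (N = 24 ∧ a = 12 ∧ b = 8 ∧ c = 6) ∨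
      (N = 60 ∧ a = 30 ∧ b = 20 ∧ c = 12) := by
  have hp2 : p = 2 := by
    by_contra h
    have h1 : a * 3 ≤ N := ha ▸ Nat.mul_le_mul_left a (by lia)
    have h2 : b * 3 ≤ N := hb ▸ Nat.mul_le_mul_left b (by lia)
    have h3 : c * 3 ≤ N := hc ▸ Nat.mul_le_mul_left c (by lia)
    lia
  subst hp2
  have hq4 : q < 4 := by
    by_contra h
    have h2 : b * 4 ≤ N := hb ▸ Nat.mul_le_mul_left b (by lia)
    have h3 : c * 4 ≤ N := hc ▸ Nat.mul_le_mul_left c (by lia)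
    lia
  obtain rfl | rfl : q = 2 ∨ q = 3 := by lia
  · left; lia
  · right
    have hr6 : r < 6 := by
      by_contra h
      have h3 : c * 6 ≤ N := hc ▸ Nat.mul_le_mul_left c (by lia)
      lia
    interval_cases r <;> lia

lemma forall_lt_ncard_orbit {ι : Type*} {x : ι → X} {n : ℕ}
    (hcover : ∀ y, ∃ i, y ∈ orbit G (x i)) (hx : ∀ i, n < (orbit G (x i)).ncard) (y : X) :
    n < (orbit G y).ncard := by
  obtain ⟨i, hi⟩ := hcover y
  rw [orbit_eq_iff.2 hi]
  exact hx i

lemma mem_orbit_of_two_dvd_card_stabilizer {x : Fin 3 → X}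
    (hcover : ∀ y, ∃ i, y ∈ orbit G (x i)) (hG : Nat.card G = 60)
    (h1 : (orbit G (x 1)).ncard = 20) (h2 : (orbit G (x 2)).ncard = 12) {y : X}
    (hy : 2 ∣ Nat.card (stabilizer G y)) : y ∈ orbit G (x 0) := by
  obtain ⟨i, hi⟩ := hcover y
  have hmul := ncard_orbit_mul_card_stabilizer (G := G) y
  rw [orbit_eq_iff.2 hi, hG] at hmul
  match i with
  | 0 => exact hi
  | 1 => rw [h1] at hmul; lia
  | 2 => rw [h2] at hmul; lia

namespace HasTwoFixedPoints

variable [Finite G] (h : HasTwoFixedPoints G X) (hcyc : ∀ x : X, IsCyclic (stabilizer G x))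
include h hcyc

theorem isPolyhedralGroup_of_three_orbits [Finite X] (hX : ∀ x : X, stabilizer G x ≠ ⊥)
    (hk : Nat.card (orbitRel.Quotient G X) = 3) : IsPolyhedralGroup G := by
  obtain ⟨x, hmono, hsum, hcover⟩ := exists_orbit_representatives hk
  have hburnside := h.two_mul_card_add_card
  rw [hk, ← hsum, Fin.sum_univ_three] at hburnside
  have hmul (i) := ncard_orbit_mul_card_stabilizer (G := G) (x i)
  rcases signature_cases (hmul 0) (hmul 1) (hmul 2) (two_le_card_stabilizer (hX (x 0)))
      (hmono (Fin.zero_le 1)) (hmono (by decide : (1 : Fin 3) ≤ 2)) (by lia) with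
    h2 | ⟨hG, h4⟩ | ⟨hG, h12, h8, h6⟩ | ⟨hG, h30, h20, h12⟩
  · exact .inr (.inl ⟨_, Nat.card_pos, h.nonempty_mulEquiv_dihedralGroup (x 2) h2⟩)
  · exact .inr (.inr (.inl (h.nonempty_mulEquiv_alternatingGroup_four hG h4)))
  · have hlarge := forall_lt_ncard_orbit (n := 2) hcover fun i => by
      fin_cases i <;> simp [h12, h8, h6]
    exact .inr (.inr (.inr (.inl
      (nonempty_mulEquiv_perm_four hG (h.eq_bot_of_normal_of_isCyclic hlarge)))))
  · have hlarge := forall_lt_ncard_orbit (n := 2) hcover fun i => by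
      fin_cases i <;> simp [h30, h20, h12]
    have hx : Nat.card (stabilizer G (x 0)) = 2 := by
      have := hmul 0
      rw [h30, hG] at this
      lia
    exact .inr (.inr (.inr (.inr (h.nonempty_mulEquiv_alternatingGroup_five hx
      (fun y => mem_orbit_of_two_dvd_card_stabilizer hcover hG h20 h12) hG hlarge))))

theorem isCyclic_of_two_orbits [Finite X] (hk : Nat.card (orbitRel.Quotient G X) = 2) :
    IsCyclic G := by
  obtain ⟨x, -, hsum, -⟩ := exists_orbit_representatives hk
  have hburnside := h.two_mul_card_add_card
  rw [hk, ← hsum, Fin.sum_univ_two] at hburnside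
  have hpos (i) : 0 < (orbit G (x i)).ncard := (Set.ncard_pos (Set.toFinite _)).2 (nonempty_orbit _)
  have horbit : (stabilizer G (x 0)).index = 1 := by
    rw [index_stabilizer]
    have := hpos 0
    have := hpos 1
    lia
  have := hcyc (x 0)
  rw [Subgroup.index_eq_one.1 horbit] at this
  exact Subgroup.topEquiv.isCyclic.1 this

theorem isPolyhedralGroup_of_stabilizer_ne_bot [Finite X] (hX : ∀ x : X, stabilizer G x ≠ ⊥) :
    IsPolyhedralGroup G := by
  rcases subsingleton_or_nontrivial G with _ | _
  · exact .inl isCyclic_of_subsingleton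
  · exact (h.card_orbits_eq_two_or_three hX).elim
      (fun hk => .inl (h.isCyclic_of_two_orbits hcyc hk))
      (h.isPolyhedralGroup_of_three_orbits hcyc hX)

end HasTwoFixedPoints

section Poles

variable (G X)

/-- The points of `X` fixed by some nontrivial element of `G`, called poles by Klein. -/
def poles : SubMulAction G X where
  carrier := {x | stabilizer G x ≠ ⊥}
  smul_mem' g x hx := by
    change stabilizer G (g • x) ≠ ⊥
    rw [stabilizer_smul_eq_stabilizer_map_conj, Ne,
      Subgroup.map_eq_bot_iff_of_injective _ (MulAut.conj g).injective]
    exact hx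

variable {G X}

lemma mem_poles_of_smul_eq {g : G} (hg : g ≠ 1) {x : X} (hx : g • x = x) : x ∈ poles G X :=
  fun hbot => hg (Subgroup.mem_bot.1 (hbot ▸ hx))

lemma ncard_fixedBy_poles {g : G} (hg : g ≠ 1) :
    (fixedBy (poles G X) g).ncard = (fixedBy X g).ncard := by
  rw [← Set.ncard_image_of_injective _ Subtype.val_injective]
  congr 1
  ext x
  constructor
  · rintro ⟨y, hy, rfl⟩
    exact congrArg Subtype.val hy
  · exact fun hx => ⟨⟨x, mem_poles_of_smul_eq hg hx⟩, Subtype.ext hx, rfl⟩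

namespace HasTwoFixedPoints

variable [Finite G] (h : HasTwoFixedPoints G X)
include h

lemma finite_poles : Finite (poles G X) := by
  have hfinite : (⋃ g ∈ {g : G | g ≠ 1}, fixedBy X g).Finite :=
    (Set.toFinite _).biUnion fun g hg =>
      Set.finite_of_ncard_ne_zero (by rw [h g hg]; exact two_ne_zero)
  refine hfinite.subset fun x hx => ?_
  obtain ⟨g, hgx, hg⟩ := (Subgroup.bot_or_exists_ne_one _).resolve_left hx
  exact Set.mem_biUnion hg hgx

theorem isPolyhedralGroup (hcyc : ∀ x : X, IsCyclic (stabilizer G x)) :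
    IsPolyhedralGroup G := by
  have := h.finite_poles
  have hpoles : HasTwoFixedPoints G (poles G X) := fun g hg =>
    (ncard_fixedBy_poles hg).trans (h g hg)
  refine hpoles.isPolyhedralGroup_of_stabilizer_ne_bot (fun y => ?_) fun y => ?_
  all_goals rw [SubMulAction.stabilizer_of_subMul]
  · exact hcyc y
  · exact y.2

end HasTwoFixedPoints

end Poles

end Counting

section ProjectiveLine

open Matrix Matrix.GeneralLinearGroup OnePoint
open scoped MatrixGroups

variable {K : Type*} [Field K]

lemma eq_center_of_forall_mem_iff {n R : Type*} [Fintype n] [DecidableEq n] [CommRing R]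
    {S : Subgroup (GL n R)}
    (hS : ∀ g : GL n R, g ∈ S ↔ ∃ c : Rˣ, (g : Matrix n n R) = (c : R) • (1 : Matrix n n R)) :
    S = Subgroup.center (GL n R) := by
  ext g
  rw [hS, center_eq_range_scalar]
  simp [Units.ext_iff, eq_comm, smul_one_eq_diagonal]

lemma mk_upperRightHom_eq_one_iff {t : K} :
    ProjGenLinGroup.mk (upperRightHom t) = 1 ↔ t = 0 := by
  refine ⟨fun h => ?_, ?_⟩
  · obtain ⟨u, hu⟩ := mem_center_iff_val_mem_range_scalar.1 (ProjGenLinGroup.mk_eq_one.1 h)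
    simpa using (congrFun₂ hu 0 1).symm
  · rintro rfl
    rw [AddChar.map_zero_eq_one, map_one]

lemma projGenLinGroup_map_injective {n R S : Type*} [Fintype n] [DecidableEq n] [CommRing R]
    [CommRing S] {φ : R →+* S} (hφ : Function.Injective φ) :
    Function.Injective (ProjGenLinGroup.map (n := n) φ) := by
  have hmap : Function.Injective (GeneralLinearGroup.map (n := n) φ) :=
    Units.map_injective (f := (φ.mapMatrix : Matrix n n R →+* Matrix n n S).toMonoidHom)
      (Matrix.map_injective hφ)
  refine (injective_iff_map_eq_one _).2 fun q hq => ?_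
  induction q using ProjGenLinGroup.induction_on with | _ g
  rw [ProjGenLinGroup.map_mk, ProjGenLinGroup.mk_eq_one, Subgroup.mem_center_iff] at hq
  rw [ProjGenLinGroup.mk_eq_one, Subgroup.mem_center_iff]
  exact fun h => hmap (by simpa only [map_mul] using hq (GeneralLinearGroup.map φ h))

variable [DecidableEq K]

lemma scalar_smul (u : Kˣ) (x : OnePoint K) : GeneralLinearGroup.scalar (Fin 2) u • x = x := by
  cases x with
  | infty => simp [smul_infty_eq_ite]
  | coe z => simp [smul_some_eq_ite]

instance mulActionOnePoint : MulAction PGL(2, K) (OnePoint K) :=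
  ProjGenLinGroup.mulActionOfGL scalar_smul

lemma exists_smul_infty_eq (x : OnePoint K) : ∃ q : PGL(2, K), q • ∞ = x := by
  obtain ⟨g, hg⟩ := OnePoint.exists_mem_SL2 K x
  exact ⟨ProjGenLinGroup.mk (SpecialLinearGroup.mapGL K g), hg⟩

/-- The homomorphism sending a projective transformation fixing `∞`, which acts on the affine
coordinate as `z ↦ μ * z + b`, to `μ`. -/
def multiplier : stabilizer PGL(2, K) (∞ : OnePoint K) →* K where
  toFun q := Quotient.liftOn q.1 (fun g : GL (Fin 2) K => g 0 0 / g 1 1) fun g h hgh => by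
    obtain ⟨u, rfl⟩ := ProjGenLinGroup.mk_eq_mk_iff.1 (Quotient.sound hgh)
    simp [mul_div_mul_right]
  map_one' := by
    change (1 : GL (Fin 2) K) 0 0 / (1 : GL (Fin 2) K) 1 1 = 1
    simp
  map_mul' := by
    rintro ⟨⟨g⟩, hg⟩ ⟨⟨h⟩, hh⟩
    have hg' : g 1 0 = 0 := smul_infty_eq_self_iff.1 hg
    have hh' : h 1 0 = 0 := smul_infty_eq_self_iff.1 hh
    change (g * h) 0 0 / (g * h) 1 1 = g 0 0 / g 1 1 * (h 0 0 / h 1 1)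
    simp [Matrix.mul_apply, hg', hh', div_mul_div_comm]

theorem exists_eq_mk_upperRightHom {q : stabilizer PGL(2, K) (∞ : OnePoint K)}
    (hq : multiplier q = 1) : ∃ t : K, (q : PGL(2, K)) = ProjGenLinGroup.mk (upperRightHom t) := by
  obtain ⟨⟨g⟩, hg⟩ := q
  have hg10 : g 1 0 = 0 := smul_infty_eq_self_iff.1 hg
  have hdiag : g 0 0 / g 1 1 = 1 := hq
  have hg11 : g 1 1 ≠ 0 := fun h => by simp [h] at hdiag
  have hg00 : g 0 0 = g 1 1 := (div_eq_one_iff_eq hg11).1 hdiag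
  refine ⟨g 0 1 / g 1 1, (ProjGenLinGroup.mk_eq_mk_iff.2 ⟨Units.mk0 _ hg11, ?_⟩).symm⟩
  ext i j
  fin_cases i <;> fin_cases j <;> simp [hg00, hg10, hg11]

lemma ncard_fixedBy_of_multiplier_ne_one {q : stabilizer PGL(2, K) (∞ : OnePoint K)}
    (hq : multiplier q ≠ 1) : (fixedBy (OnePoint K) (q : PGL(2, K))).ncard = 2 := by
  obtain ⟨⟨g⟩, hg⟩ := q
  have hg10 : g 1 0 = 0 := smul_infty_eq_self_iff.1 hg
  have hdiag : g 0 0 / g 1 1 ≠ 1 := hq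
  have hg11 : g 1 1 ≠ 0 := fun h => g.det_ne_zero (by rw [det_fin_two, h, hg10]; ring)
  have hsub : g 1 1 - g 0 0 ≠ 0 :=
    sub_ne_zero.2 fun h => hdiag ((div_eq_one_iff_eq hg11).2 h.symm)
  refine Set.ncard_eq_two.2 ⟨∞, ((g 0 1 / (g 1 1 - g 0 0) : K) : OnePoint K), infty_ne_coe _, ?_⟩
  ext x
  change g • x = x ↔ _
  cases x with
  | infty => simp [smul_infty_eq_self_iff.2 hg10]
  | coe z =>
    rw [← fixpointPolynomial_aeval_eq_zero_iff]
    simp [fixpointPolynomial, hg10, eq_div_iff hsub, sub_eq_zero, mul_comm z]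

theorem multiplier_ne_one_of_pow_eq_one {q : stabilizer PGL(2, K) (∞ : OnePoint K)} {n : ℕ}
    (hn : (n : K) ≠ 0) (hqn : q ^ n = 1) (hq : q ≠ 1) : multiplier q ≠ 1 := by
  intro h
  obtain ⟨t, ht⟩ := exists_eq_mk_upperRightHom h
  have hnt : (n : K) * t = 0 := by
    rw [← nsmul_eq_mul, ← mk_upperRightHom_eq_one_iff, AddChar.map_nsmul_eq_pow, map_pow, ← ht]
    exact congrArg Subtype.val hqn
  have ht0 : t = 0 := (mul_eq_zero.1 hnt).resolve_left hn
  exact hq (Subtype.ext (ht.trans (mk_upperRightHom_eq_one_iff.2 ht0)))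

theorem isCyclic_of_injective_stabilizer {H : Type*} [Group H] [Finite H]
    (hH : (Nat.card H : K) ≠ 0) {x : OnePoint K} (f : H →* stabilizer PGL(2, K) x)
    (hf : Function.Injective f) : IsCyclic H := by
  obtain ⟨q, rfl⟩ := exists_smul_infty_eq x
  let e : stabilizer PGL(2, K) (q • ∞ : OnePoint K) ≃* stabilizer PGL(2, K) (∞ : OnePoint K) :=
    (stabilizerEquivStabilizer rfl).symm
  refine isCyclic_of_injective_ringHom (multiplier.comp (e.toMonoidHom.comp f))
    ((injective_iff_map_eq_one _).2 fun a ha => ?_)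
  by_contra ha1
  refine multiplier_ne_one_of_pow_eq_one (q := e (f a)) hH ?_ ?_ ha
  · rw [← map_pow, ← map_pow, pow_card_eq_one', map_one, map_one]
  · exact fun h => ha1 ((map_eq_one_iff f hf).1 (e.map_eq_one_iff.1 h))

section AlgClosed

variable [IsAlgClosed K]

lemma exists_smul_eq_self (q : PGL(2, K)) : ∃ x : OnePoint K, q • x = x := by
  induction q using ProjGenLinGroup.induction_on with | _ g
  by_cases hg : g 1 0 = 0
  · exact ⟨∞, smul_infty_eq_self_iff.2 hg⟩
  · have hdeg : g.fixpointPolynomial.degree ≠ 0 := by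
      rw [fixpointPolynomial, sub_eq_add_neg, ← map_neg, Polynomial.degree_quadratic hg]
      exact two_ne_zero
    obtain ⟨z, hz⟩ := IsAlgClosed.exists_aeval_eq_zero K _ hdeg
    exact ⟨z, fixpointPolynomial_aeval_eq_zero_iff.1 hz⟩

theorem ncard_fixedBy_eq_two {q : PGL(2, K)} {n : ℕ} (hn : (n : K) ≠ 0) (hqn : q ^ n = 1)
    (hq : q ≠ 1) : (fixedBy (OnePoint K) q).ncard = 2 := by
  obtain ⟨x, hx⟩ := exists_smul_eq_self q
  obtain ⟨p, rfl⟩ := exists_smul_infty_eq x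
  let q' : stabilizer PGL(2, K) (∞ : OnePoint K) := ⟨p⁻¹ * q * p⁻¹⁻¹, by
    rw [mem_stabilizer_iff, inv_inv, mul_smul, mul_smul, hx, inv_smul_smul]⟩
  have hq'n : q' ^ n = 1 := Subtype.ext <|
    conj_pow.trans (by rw [hqn, mul_one, mul_inv_cancel, OneMemClass.coe_one])
  have hq' : q' ≠ 1 := fun h => hq (conj_eq_one_iff.1 (congrArg Subtype.val h))
  have hncard := ncard_fixedBy_of_multiplier_ne_one (multiplier_ne_one_of_pow_eq_one hn hq'n hq')
  rwa [← smul_fixedBy, Set.ncard_smul_set] at hncard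

omit [DecidableEq K] in
theorem isPolyhedralGroup_of_injective {G : Type*} [Group G] [Finite G]
    (hG : (Nat.card G : K) ≠ 0) (f : G →* PGL(2, K)) (hf : Function.Injective f) :
    IsPolyhedralGroup G := by
  classical
  let _ : MulAction G (OnePoint K) := compHom (OnePoint K) f
  have htwo : HasTwoFixedPoints G (OnePoint K) := fun g hg =>
    ncard_fixedBy_eq_two hG (by rw [← map_pow, pow_card_eq_one', map_one])
      ((map_ne_one_iff f hf).2 hg)
  refine htwo.isPolyhedralGroup fun x => ?_
  have hcard : (Nat.card (stabilizer G x) : K) ≠ 0 := fun h =>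
    hG (by rw [← (stabilizer G x).card_mul_index, Nat.cast_mul, h, zero_mul])
  exact isCyclic_of_injective_stabilizer hcard
    ((f.comp (stabilizer G x).subtype).codRestrict (stabilizer PGL(2, K) x) fun g => g.2)
    fun a b hab => Subtype.ext (hf (congrArg Subtype.val hab))

end AlgClosed

end ProjectiveLine

end Polyhedral

open Polyhedral
open scoped MatrixGroups

theorem finite_subgroups_PGL2C_general {K : Type*} [Field K] (G : Subgroup PGL(2, K))
    [Finite G] (hG : (Nat.card G : K) ≠ 0) : IsPolyhedralGroup G := by
  have hcard : (Nat.card G : AlgebraicClosure K) ≠ 0 := by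
    rw [← map_natCast (algebraMap K (AlgebraicClosure K))]
    exact (map_ne_zero _).2 hG
  exact isPolyhedralGroup_of_injective hcard ((Matrix.ProjGenLinGroup.map _).comp G.subtype)
    ((projGenLinGroup_map_injective (algebraMap K (AlgebraicClosure K)).injective).comp
      G.subtype_injective)

/-- **The Jordan–Klein classification of finite groups of binary linear fractional
substitutions.** Let `S` be the (normal) subgroup of scalar matrices in `GL(2, ℂ)`, so
that `GL(2, ℂ) ⧸ S = PGL(2, ℂ)`. Every finite subgroup of `PGL(2, ℂ)` is isomorphic to a
cyclic group, a dihedral group, the alternating group `A₄`, the symmetric group `S₄`, or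
the alternating group `A₅`. -/
theorem finite_subgroups_PGL2C
    (S : Subgroup (Matrix.GeneralLinearGroup (Fin 2) ℂ)) [S.Normal]
    (hS : ∀ g : Matrix.GeneralLinearGroup (Fin 2) ℂ,
      g ∈ S ↔ ∃ c : ℂˣ, (g : Matrix (Fin 2) (Fin 2) ℂ) = (c : ℂ) • (1 : Matrix (Fin 2) (Fin 2) ℂ))
    (G : Subgroup (Matrix.GeneralLinearGroup (Fin 2) ℂ ⧸ S)) (hG : Finite G) :
    IsCyclic G ∨
    (∃ m : ℕ, 0 < m ∧ Nonempty (G ≃* DihedralGroup m)) ∨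
    Nonempty (G ≃* alternatingGroup (Fin 4)) ∨
    Nonempty (G ≃* Equiv.Perm (Fin 4)) ∨
    Nonempty (G ≃* alternatingGroup (Fin 5)) := by
  have hcard : (Nat.card G : ℂ) ≠ 0 := Nat.cast_ne_zero.2 Nat.card_pos.ne'
  obtain rfl := eq_center_of_forall_mem_iff hS
  exact @finite_subgroups_PGL2C_general ℂ _ G hG hcard
end
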